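/- Let $n,m$ be positive integers, $1<\alpha<\infty$, $0<p\leqslant q<\infty$ with $q\geqslant 2$, and set $r_0=\sqrt{p/q}$. Let $Q(\mathbf{z},w)\in\mathbb{C}[z_1,\dots,z_n,w]$ be an $m$-homogeneous polynomial. Then $\left(\int_{\mathbb{T}}\int_{\mathbb{D}^n}|Q(r_0z_1,\dots,r_0z_n,r_0w)|^{q}\,dA_\alpha(\mathbf{z})\,dw\right)^{1/q}\leqslant\left(\int_{\mathbb{T}}\int_{\mathbb{D}^n}|Q(\mathbf{z},w)|^{p}\,dA_\alpha(\mathbf{z})\,dw\right)^{1/p}$; equivalently, since $Q$ is $m$-homogeneous, $\|Q\|_{A_\alpha^{q}(\mathbb{D}^n,\mathbf{z})\times H^{q}(\mathbb{T},w)}\leqslant (q/p)^{m/2}\,\|Q\|_{A_\alpha^{p}(\mathbb{D}^n,\mathbf{z})\times H^{p}(\mathbb{T},w)}$. -/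

import Mathlib

open MeasureTheory Metric

/-- The weighted Bergman measure `dA_α(z) = (α-1)(1-|z|²)^(α-2) dA(z)` on the unit disk,
where `dA = dx dy / π` is the normalized area measure. -/
noncomputable def bergmanMeasure (α : ℝ) : Measure ℂ :=
  ((volume : Measure ℂ).restrict (ball (0 : ℂ) 1)).withDensity
    fun z => ENNReal.ofReal ((α - 1) * (1 - ‖z‖ ^ 2) ^ (α - 2) / Real.pi)

/-- The product Bergman measure `dA_α(z₁) ⋯ dA_α(zₙ)` on the polydisc. -/
noncomputable def bergmanMeasurePi (n : ℕ) (α : ℝ) : Measure (Fin n → ℂ) :=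
  Measure.pi fun _ => bergmanMeasure α

/-- The density of `bergmanMeasure α` with respect to Lebesgue measure on `ℂ`. -/
noncomputable def bergmanDensity (α : ℝ) (z : ℂ) : ℝ :=
  (ball (0 : ℂ) 1).indicator (fun z => (α - 1) * (1 - ‖z‖ ^ 2) ^ (α - 2) / Real.pi) z

lemma bergmanDensity_nonneg {α : ℝ} (hα : 1 < α) (z : ℂ) : 0 ≤ bergmanDensity α z := by
  unfold bergmanDensity
  refine Set.indicator_nonneg (fun z hz => ?_) z
  rw [mem_ball_zero_iff] at hz
  have : 0 ≤ 1 - ‖z‖ ^ 2 := by nlinarith [norm_nonneg z]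
  have := Real.rpow_nonneg this (α - 2)
  have := Real.pi_pos
  have : 0 ≤ α - 1 := by linarith
  positivity

lemma measurable_bergmanDensity (α : ℝ) : Measurable (bergmanDensity α) := by
  unfold bergmanDensity
  exact Measurable.indicator (by fun_prop) measurableSet_ball

lemma bergmanMeasure_eq_withDensity (α : ℝ) :
    bergmanMeasure α = (volume : Measure ℂ).withDensity
      fun z => ENNReal.ofReal (bergmanDensity α z) := by
  rw [bergmanMeasure, ← withDensity_indicator measurableSet_ball]
  congr 1
  ext z
  by_cases hz : z ∈ ball (0 : ℂ) 1 <;> simp [bergmanDensity, hz]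

lemma integral_bergmanMeasure {α : ℝ} (hα : 1 < α) (h : ℂ → ℝ) :
    ∫ z, h z ∂bergmanMeasure α = ∫ z, bergmanDensity α z * h z := by
  rw [bergmanMeasure_eq_withDensity, integral_withDensity_eq_integral_toReal_smul
    (measurable_bergmanDensity α).ennreal_ofReal (by simp)]
  simp [ENNReal.toReal_ofReal (bergmanDensity_nonneg hα _)]

lemma integrable_bergmanMeasure_iff {α : ℝ} (hα : 1 < α) {h : ℂ → ℝ} :
    Integrable h (bergmanMeasure α) ↔ Integrable (fun z => bergmanDensity α z * h z) := by
  rw [bergmanMeasure_eq_withDensity, integrable_withDensity_iff_integrable_smul'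
    (measurable_bergmanDensity α).ennreal_ofReal (by simp)]
  simp [ENNReal.toReal_ofReal (bergmanDensity_nonneg hα _)]

lemma hasDerivAt_one_sub_sq_rpow {x : ℝ} (hx : x ^ 2 < 1) (β : ℝ) :
    HasDerivAt (fun x : ℝ => (1 - x ^ 2) ^ β) (-(2 * x) * β * (1 - x ^ 2) ^ (β - 1)) x := by
  have h := ((hasDerivAt_pow 2 x).const_sub 1).rpow_const (p := β) (Or.inl (by linarith))
  simpa using h

lemma integral_bergmanDensity {α : ℝ} (hα : 1 < α) :
    Integrable (bergmanDensity α) ∧ ∫ z, bergmanDensity α z = 1 := by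
  set f : ℝ → ℝ := (Set.Iio 1).indicator fun x => (α - 1) * (1 - x ^ 2) ^ (α - 2) / Real.pi
    with hf
  have hfun : bergmanDensity α = fun z => f ‖z‖ := by
    ext z
    by_cases hz : ‖z‖ < 1 <;> simp [bergmanDensity, hf, hz]
  set G : ℝ → ℝ := fun x => - (1 - x ^ 2) ^ (α - 1) / (2 * Real.pi) with hG
  set G' : ℝ → ℝ := fun x => x * ((α - 1) * (1 - x ^ 2) ^ (α - 2) / Real.pi) with hG'
  have hcont : ContinuousOn G (Set.Icc 0 1) := by
    apply Continuous.continuousOn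
    exact ((Continuous.rpow_const (by fun_prop) fun x => Or.inr (by linarith)).neg).div_const _
  have hder : ∀ x ∈ Set.Ioo (0 : ℝ) 1, HasDerivAt G (G' x) x := by
    intro x hx
    have hx2 : x ^ 2 < 1 := by nlinarith [hx.1, hx.2]
    have h := (hasDerivAt_one_sub_sq_rpow hx2 (α - 1)).neg.div_const (2 * Real.pi)
    refine h.congr_deriv ?_
    rw [hG', show α - 1 - 1 = α - 2 by ring]
    field_simp
  have hnn : ∀ x ∈ Set.Ioo (0 : ℝ) 1, 0 ≤ G' x := by
    intro x hx
    have : 0 ≤ 1 - x ^ 2 := by nlinarith [hx.1, hx.2]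
    have := Real.rpow_nonneg this (α - 2)
    have := Real.pi_pos
    have : 0 ≤ α - 1 := by linarith
    have := hx.1.le
    simp only [hG']
    positivity
  have hInt := intervalIntegral.integrableOn_deriv_of_nonneg hcont hder hnn
  have hval : ∫ x in (0:ℝ)..1, G' x = G 1 - G 0 :=
    intervalIntegral.integral_eq_sub_of_hasDerivAt_of_le zero_le_one hcont hder
      ((intervalIntegrable_iff_integrableOn_Ioc_of_le zero_le_one).2 hInt)
  have hind : (fun y : ℝ => y ^ (Module.finrank ℝ ℂ - 1) • f y)
      = (Set.Iio 1).indicator G' := by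
    ext y
    by_cases hy : y < 1 <;> simp [hf, hG', hy]
  have hset : Set.Iio (1:ℝ) ∩ Set.Ioi 0 = Set.Ioo 0 1 := by
    ext; simp [and_comm]
  refine ⟨?_, ?_⟩
  · rw [hfun, integrable_fun_norm_addHaar, hind, IntegrableOn,
      integrable_indicator_iff measurableSet_Iio, IntegrableOn,
      Measure.restrict_restrict measurableSet_Iio, hset]
    exact hInt.mono_set Set.Ioo_subset_Ioc_self
  · rw [hfun, integral_fun_norm_addHaar, hind, integral_indicator measurableSet_Iio,
      Measure.restrict_restrict measurableSet_Iio, hset, ← integral_Ioc_eq_integral_Ioo,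
      ← intervalIntegral.integral_of_le zero_le_one, hval]
    have : (0:ℝ) ^ (α - 1) = 0 := Real.zero_rpow (by linarith)
    simp [hG, this, Measure.real, Complex.volume_ball]
    field_simp

lemma isProbabilityMeasure_bergmanMeasure {α : ℝ} (hα : 1 < α) :
    IsProbabilityMeasure (bergmanMeasure α) := by
  constructor
  rw [bergmanMeasure_eq_withDensity, withDensity_apply _ MeasurableSet.univ,
    Measure.restrict_univ, ← ofReal_integral_eq_lintegral_ofReal (integral_bergmanDensity hα).1
      (Filter.Eventually.of_forall (bergmanDensity_nonneg hα)), (integral_bergmanDensity hα).2]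
  simp

lemma bergmanMeasure_compl_ball (α : ℝ) : bergmanMeasure α (ball 0 1)ᶜ = 0 := by
  unfold bergmanMeasure
  apply withDensity_absolutelyContinuous
  rw [Measure.restrict_apply measurableSet_ball.compl]
  simp

lemma ae_mem_ball_bergmanMeasure (α : ℝ) : ∀ᵐ z ∂bergmanMeasure α, z ∈ ball (0:ℂ) 1 :=
  bergmanMeasure_compl_ball α

lemma restrict_closedBall_bergmanMeasure (α : ℝ) :
    (bergmanMeasure α).restrict (closedBall 0 1) = bergmanMeasure α := by
  rw [Measure.restrict_eq_self_of_ae_mem]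
  filter_upwards [ae_mem_ball_bergmanMeasure α] with z hz using ball_subset_closedBall hz

lemma Continuous.integrable_bergmanMeasure {α : ℝ} (hα : 1 < α) {h : ℂ → ℝ} (hh : Continuous h) :
    Integrable h (bergmanMeasure α) := by
  have := isProbabilityMeasure_bergmanMeasure hα
  rw [← restrict_closedBall_bergmanMeasure]
  exact hh.continuousOn.integrableOn_compact (isCompact_closedBall 0 1)

lemma bergmanDensity_succ {α : ℝ} (hα : 1 < α) (z : ℂ) :
    bergmanDensity (α + 1) z = α / (α - 1) * (bergmanDensity α z * (1 - ‖z‖ ^ 2)) := by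
  unfold bergmanDensity
  by_cases hz : z ∈ ball (0 : ℂ) 1
  · simp only [Set.indicator_of_mem hz]
    rw [mem_ball_zero_iff] at hz
    have : 0 < 1 - ‖z‖ ^ 2 := by nlinarith [norm_nonneg z]
    rw [show α + 1 - 2 = α - 2 + 1 by ring, Real.rpow_add_one this.ne']
    have : α - 1 ≠ 0 := by linarith
    field_simp
    ring
  · simp [Set.indicator_of_notMem hz]

lemma integral_bergmanMeasure_succ {α : ℝ} (hα : 1 < α) (h : ℂ → ℝ) :
    ∫ z, h z ∂bergmanMeasure (α + 1)
      = α / (α - 1) * ∫ z, (1 - ‖z‖ ^ 2) * h z ∂bergmanMeasure α := by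
  rw [integral_bergmanMeasure (by linarith), integral_bergmanMeasure hα, ← integral_const_mul]
  congr 1
  ext z
  rw [bergmanDensity_succ hα]
  ring

lemma measurePreserving_mul_bergmanMeasure {α : ℝ} (c : Circle) :
    MeasurePreserving (fun z : ℂ => (c : ℂ) * z) (bergmanMeasure α) (bergmanMeasure α) := by
  have hvol : MeasurePreserving (fun z : ℂ => (c : ℂ) * z) volume volume :=
    (rotation c).measurePreserving
  refine ⟨by fun_prop, ?_⟩
  ext s hs
  rw [Measure.map_apply (by fun_prop) hs, bergmanMeasure_eq_withDensity,
    withDensity_apply _ hs, withDensity_apply _ (hs.preimage (by fun_prop)),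
    ← hvol.setLIntegral_comp_preimage hs (measurable_bergmanDensity α).ennreal_ofReal]
  congr 1
  ext z
  have hc : ‖(c : ℂ)‖ = 1 := Circle.norm_coe c
  simp only [bergmanDensity, Set.indicator, mem_ball_zero_iff, norm_mul, hc, one_mul]

lemma integral_bergmanMeasure_circle_mul {α : ℝ} (c : Circle) (h : ℂ → ℝ) :
    ∫ z, h (c * z) ∂bergmanMeasure α = ∫ z, h z ∂bergmanMeasure α :=
  (measurePreserving_mul_bergmanMeasure c).integral_comp
    (rotation c).toHomeomorph.measurableEmbedding h

lemma integral_by_parts_re {α : ℝ} (hα : 1 < α) {F F' : ℂ → ℝ} (hF : Continuous F)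
    (hF' : Continuous F') (hd : ∀ z : ℂ, HasDerivAt (fun t : ℝ => F (z + t)) (F' z) 0) :
    ∫ z, ((1 - ‖z‖ ^ 2) * F' z - 2 * (α - 1) * (z.re * F z)) ∂bergmanMeasure α = 0 := by
  rw [integral_bergmanMeasure hα]
  set k : ℂ → ℝ := fun z => bergmanDensity α z *
    ((1 - ‖z‖ ^ 2) * F' z - 2 * (α - 1) * (z.re * F z)) with hk
  have hki : Integrable k := (integrable_bergmanMeasure_iff hα).1
    (Continuous.integrable_bergmanMeasure hα (by fun_prop))
  have e := Complex.volume_preserving_equiv_real_prod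
  have hki' : Integrable (fun p : ℝ × ℝ => k (Complex.measurableEquivRealProd.symm p))
      (volume.prod volume) := by
    have := (e.symm).integrable_comp_emb (g := k)
      Complex.measurableEquivRealProd.symm.measurableEmbedding
    exact this.2 hki
  have h1 : ∫ z, k z = ∫ p : ℝ × ℝ, k (Complex.measurableEquivRealProd.symm p) :=
    (e.symm.integral_comp Complex.measurableEquivRealProd.symm.measurableEmbedding k).symm
  rw [h1, Measure.volume_eq_prod, integral_prod_symm _ hki']
  apply integral_eq_zero_of_ae
  filter_upwards [hki'.prod_left_ae] with y hy
  simp only [Pi.zero_apply]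
  have hn : ∀ x : ℝ, ‖(⟨x, y⟩ : ℂ)‖ ^ 2 = x ^ 2 + y ^ 2 := by
    intro x
    rw [Complex.sq_norm, Complex.normSq_mk]; ring
  have hs : ∀ x : ℝ, Complex.measurableEquivRealProd.symm (x, y) = ⟨x, y⟩ := fun x => rfl
  simp only [hs] at hy ⊢
  have hmem : ∀ x : ℝ, (⟨x, y⟩ : ℂ) ∈ ball (0:ℂ) 1 ↔ x ^ 2 + y ^ 2 < 1 := by
    intro x
    rw [mem_ball_zero_iff, ← hn x, ← sq_lt_one_iff₀ (norm_nonneg _)]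
  by_cases hy1 : 1 ≤ y ^ 2
  · apply integral_eq_zero_of_ae
    refine Filter.Eventually.of_forall fun x => ?_
    have : (⟨x, y⟩ : ℂ) ∉ ball (0:ℂ) 1 := by
      rw [hmem]; nlinarith [sq_nonneg x]
    simp [hk, bergmanDensity, this]
  push Not at hy1
  set b := Real.sqrt (1 - y ^ 2) with hb
  have hb0 : 0 < b := Real.sqrt_pos.2 (by linarith)
  have hb2 : b ^ 2 = 1 - y ^ 2 := Real.sq_sqrt (by linarith)
  have hmem' : ∀ x : ℝ, (⟨x, y⟩ : ℂ) ∈ ball (0:ℂ) 1 ↔ x ∈ Set.Ioo (-b) b := by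
    intro x
    rw [hmem, Set.mem_Ioo, ← abs_lt, ← sq_lt_sq₀ (abs_nonneg x) hb0.le, sq_abs, hb2]
    constructor <;> intro h <;> linarith
  set G : ℝ → ℝ := fun x => (α - 1) / Real.pi * ((1 - (x ^ 2 + y ^ 2)) ^ (α - 1) * F ⟨x, y⟩)
    with hG
  have hmk : Continuous fun x : ℝ => (⟨x, y⟩ : ℂ) := by
    have : (fun x : ℝ => (⟨x, y⟩ : ℂ)) = fun x : ℝ => (x : ℂ) + y * Complex.I := by
      ext x; apply Complex.ext <;> simp
    rw [this]; fun_prop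
  have hcont : ContinuousOn G (Set.Icc (-b) b) := by
    apply Continuous.continuousOn
    refine continuous_const.mul (Continuous.mul ?_ (hF.comp hmk))
    exact Continuous.rpow_const (by fun_prop) fun x => Or.inr (by linarith)
  have hder : ∀ x ∈ Set.Ioo (-b) b, HasDerivAt G (k ⟨x, y⟩) x := by
    intro x hx
    have hxb : (⟨x, y⟩ : ℂ) ∈ ball (0:ℂ) 1 := (hmem' x).2 hx
    have hpos : 0 < 1 - (x ^ 2 + y ^ 2) := by linarith [(hmem x).1 hxb]
    have h1 : HasDerivAt (fun x : ℝ => (1 - (x ^ 2 + y ^ 2)) ^ (α - 1))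
        (-(2 * x) * (α - 1) * (1 - (x ^ 2 + y ^ 2)) ^ (α - 2)) x := by
      have h := (((hasDerivAt_pow 2 x).add_const (y ^ 2)).const_sub 1).rpow_const
        (p := α - 1) (Or.inl hpos.ne')
      rw [show α - 1 - 1 = α - 2 by ring] at h
      simpa using h
    have h2 : HasDerivAt (fun x : ℝ => F ⟨x, y⟩) (F' ⟨x, y⟩) x := by
      have h0 := hd ⟨x, y⟩
      have h0' : HasDerivAt (fun t : ℝ => F (⟨x, y⟩ + t)) (F' ⟨x, y⟩) (x - x) := by simpa using h0
      have := HasDerivAt.comp (h := fun t : ℝ => t - x) x h0' ((hasDerivAt_id' x).sub_const x)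
      simp only [mul_one] at this
      refine this.congr_of_eventuallyEq (Filter.Eventually.of_forall fun t => ?_)
      simp only [Function.comp]
      congr 1
      apply Complex.ext <;> simp
    refine ((h1.mul h2).const_mul ((α - 1) / Real.pi)).congr_deriv ?_
    simp only [hk, bergmanDensity, Set.indicator_of_mem hxb, hn]
    rw [show α - 1 = α - 2 + 1 by ring, Real.rpow_add_one hpos.ne']
    ring
  have hsupp : ∀ x, k ⟨x, y⟩ = (Set.Ioo (-b) b).indicator (fun x => k ⟨x, y⟩) x := by
    intro x
    by_cases hx : x ∈ Set.Ioo (-b) b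
    · simp [Set.indicator_of_mem hx]
    · rw [Set.indicator_of_notMem hx]
      simp [hk, bergmanDensity, mt (hmem' x).1 hx]
  have := intervalIntegral.integral_eq_sub_of_hasDerivAt_of_le (by linarith) hcont hder
    hy.intervalIntegrable
  rw [intervalIntegral.integral_of_le (by linarith), integral_Ioc_eq_integral_Ioo,
    ← integral_indicator measurableSet_Ioo] at this
  simp_rw [← hsupp] at this
  rw [this]
  have h0 : (0:ℝ) ^ (α - 1) = 0 := Real.zero_rpow (by linarith)
  simp [hG, hb2, h0]

lemma integral_by_parts_im {α : ℝ} (hα : 1 < α) {F F' : ℂ → ℝ} (hF : Continuous F)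
    (hF' : Continuous F')
    (hd : ∀ z : ℂ, HasDerivAt (fun t : ℝ => F (z + t * Complex.I)) (F' z) 0) :
    ∫ z, ((1 - ‖z‖ ^ 2) * F' z - 2 * (α - 1) * (z.im * F z)) ∂bergmanMeasure α = 0 := by
  set c : Circle := ⟨Complex.I, by simp [Submonoid.unitSphere]⟩
  have hc : (c : ℂ) = Complex.I := rfl
  rw [← integral_bergmanMeasure_circle_mul c]
  have := integral_by_parts_re hα (F := fun z => F (Complex.I * z))
    (F' := fun z => F' (Complex.I * z)) (by fun_prop) (by fun_prop) (fun z => by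
      have := hd (Complex.I * z)
      refine this.congr_of_eventuallyEq (Filter.Eventually.of_forall fun t => ?_)
      simp only
      congr 1
      ring)
  simpa [hc] using this

lemma continuous_integral_bergmanMeasure {X : Type*} [TopologicalSpace X]
    [FirstCountableTopology X] [LocallyCompactSpace X] {α : ℝ} (hα : 1 < α) {f : X → ℂ → ℝ}
    (hf : Continuous (Function.uncurry f)) :
    Continuous fun x => ∫ z, f x z ∂bergmanMeasure α := by
  have := isProbabilityMeasure_bergmanMeasure hα
  have := continuous_parametric_integral_of_continuous (μ := bergmanMeasure α) hf
    (isCompact_closedBall (0:ℂ) 1)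
  simpa only [restrict_closedBall_bergmanMeasure] using this

/-- Evaluation at `z` of a real polynomial in `(Re z, Im z)`. -/
noncomputable def planeEval (z : ℂ) (p : MvPolynomial (Fin 2) ℝ) : ℝ :=
  MvPolynomial.eval ![z.re, z.im] p

section planeEval

variable (z : ℂ) (p q : MvPolynomial (Fin 2) ℝ)

@[simp] lemma planeEval_add : planeEval z (p + q) = planeEval z p + planeEval z q := by
  simp [planeEval]
@[simp] lemma planeEval_sub : planeEval z (p - q) = planeEval z p - planeEval z q := by
  simp [planeEval]
@[simp] lemma planeEval_mul : planeEval z (p * q) = planeEval z p * planeEval z q := by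
  simp [planeEval]
@[simp] lemma planeEval_neg : planeEval z (-p) = -planeEval z p := by
  simp [planeEval]
@[simp] lemma planeEval_pow (n : ℕ) : planeEval z (p ^ n) = planeEval z p ^ n := by
  simp [planeEval]
@[simp] lemma planeEval_C (a : ℝ) : planeEval z (MvPolynomial.C a) = a := by
  simp [planeEval]
@[simp] lemma planeEval_smul (a : ℝ) : planeEval z (a • p) = a * planeEval z p := by
  simp [planeEval]
@[simp] lemma planeEval_one : planeEval z 1 = 1 := by
  simp [planeEval]
@[simp] lemma planeEval_zero : planeEval z 0 = 0 := by
  simp [planeEval]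
@[simp] lemma planeEval_X_zero : planeEval z (MvPolynomial.X 0) = z.re := by
  simp [planeEval]
@[simp] lemma planeEval_X_one : planeEval z (MvPolynomial.X 1) = z.im := by
  simp [planeEval]
@[simp] lemma planeEval_sum {ι : Type*} (s : Finset ι) (f : ι → MvPolynomial (Fin 2) ℝ) :
    planeEval z (∑ i ∈ s, f i) = ∑ i ∈ s, planeEval z (f i) := by
  simp [planeEval]

end planeEval

@[fun_prop]
lemma continuous_planeEval (p : MvPolynomial (Fin 2) ℝ) : Continuous fun z => planeEval z p := by
  unfold planeEval
  have h : Continuous fun z : ℂ => (![z.re, z.im] : Fin 2 → ℝ) := by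
    refine continuous_pi fun i => ?_
    fin_cases i <;> simp <;> fun_prop
  exact (MvPolynomial.continuous_eval p).comp h

lemma hasDerivAt_planeEval_re (p : MvPolynomial (Fin 2) ℝ) (z : ℂ) :
    HasDerivAt (fun t : ℝ => planeEval (z + t) p) (planeEval z (MvPolynomial.pderiv 0 p)) 0 := by
  induction p using MvPolynomial.induction_on with
  | C a => simpa using hasDerivAt_const (0:ℝ) a
  | add p q hp hq =>
    simp only [planeEval_add, map_add]
    exact hp.add hq
  | mul_X p i hp =>
    fin_cases i
    · have := hp.mul ((hasDerivAt_id' (0:ℝ)).const_add z.re)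
      simp at this ⊢
      exact this.congr_deriv (by ring)
    · have := hp.mul_const z.im
      simp at this ⊢
      exact this.congr_deriv (by ring)

lemma hasDerivAt_planeEval_im (p : MvPolynomial (Fin 2) ℝ) (z : ℂ) :
    HasDerivAt (fun t : ℝ => planeEval (z + t * Complex.I) p)
      (planeEval z (MvPolynomial.pderiv 1 p)) 0 := by
  induction p using MvPolynomial.induction_on with
  | C a => simpa using hasDerivAt_const (0:ℝ) a
  | add p q hp hq =>
    simp only [planeEval_add, map_add]
    exact hp.add hq
  | mul_X p i hp =>
    fin_cases i
    · have := hp.mul_const z.re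
      simp at this ⊢
      exact this.congr_deriv (by ring)
    · have := hp.mul ((hasDerivAt_id' (0:ℝ)).const_add z.im)
      simp at this ⊢
      exact this.congr_deriv (by ring)

lemma MvPolynomial.pderiv_pderiv_comm {σ R : Type*} [CommRing R] (i j : σ)
    (p : MvPolynomial σ R) : pderiv i (pderiv j p) = pderiv j (pderiv i p) := by
  classical
  have h : ⁅(pderiv i : Derivation R (MvPolynomial σ R) (MvPolynomial σ R)),
      (pderiv j : Derivation R (MvPolynomial σ R) (MvPolynomial σ R))⁆ = 0 := by
    apply MvPolynomial.derivation_ext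
    intro k
    simp [Derivation.commutator_apply, MvPolynomial.pderiv_X, Pi.single_apply]
    split_ifs <;> simp
  have := congrArg (fun D => D p) h
  simpa [Derivation.commutator_apply, sub_eq_zero] using this

lemma MvPolynomial.totalDegree_pderiv_le {σ R : Type*} [CommRing R] (i : σ)
    (p : MvPolynomial σ R) : (pderiv i p).totalDegree ≤ p.totalDegree - 1 := by
  classical
  conv_lhs => rw [p.as_sum, map_sum]
  refine MvPolynomial.totalDegree_finsetSum_le fun v hv => ?_
  rw [MvPolynomial.pderiv_monomial]
  by_cases h0 : v i = 0
  · simp [h0]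
  refine (MvPolynomial.totalDegree_monomial_le _ _).trans ?_
  change (v - Finsupp.single i 1).sum (fun _ e => e) ≤ _
  have h1 := MvPolynomial.le_totalDegree hv
  have h2 : (v - Finsupp.single i 1).sum (fun _ e => e) + 1 = v.sum fun _ e => e := by
    have hle : Finsupp.single i 1 ≤ v := by
      rw [Finsupp.single_le_iff]; omega
    conv_rhs => rw [← tsub_add_cancel_of_le hle]
    rw [Finsupp.sum_add_index' (by simp) (by simp)]
    simp
  omega

lemma MvPolynomial.pderiv_eq_zero_of_totalDegree_eq_zero {σ R : Type*} [CommRing R] (i : σ)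
    {p : MvPolynomial σ R} (hp : p.totalDegree = 0) : pderiv i p = 0 := by
  rw [MvPolynomial.totalDegree_eq_zero_iff_eq_C] at hp
  rw [hp, MvPolynomial.pderiv_C]

/-- Integration of plane polynomials against the Bergman measure, as a linear functional. -/
noncomputable def planeIntegral {α : ℝ} (hα : 1 < α) : MvPolynomial (Fin 2) ℝ →ₗ[ℝ] ℝ where
  toFun p := ∫ z, planeEval z p ∂bergmanMeasure α
  map_add' p q := by
    simp only [planeEval_add]
    exact integral_add ((continuous_planeEval p).integrable_bergmanMeasure hα)
      ((continuous_planeEval q).integrable_bergmanMeasure hα)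
  map_smul' a p := by
    simp only [planeEval_smul, RingHom.id_apply, smul_eq_mul]
    exact integral_const_mul _ _

lemma planeIntegral_apply {α : ℝ} (hα : 1 < α) (p : MvPolynomial (Fin 2) ℝ) :
    planeIntegral hα p = ∫ z, planeEval z p ∂bergmanMeasure α := rfl

lemma planeIntegral_C_mul {α : ℝ} (hα : 1 < α) (a : ℝ) (p : MvPolynomial (Fin 2) ℝ) :
    planeIntegral hα (MvPolynomial.C a * p) = a * planeIntegral hα p := by
  rw [← MvPolynomial.smul_eq_C_mul, map_smul, smul_eq_mul]

lemma planeIntegral_nonneg {α : ℝ} (hα : 1 < α) {p : MvPolynomial (Fin 2) ℝ}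
    (h : ∀ z ∈ ball (0:ℂ) 1, 0 ≤ planeEval z p) : 0 ≤ planeIntegral hα p := by
  rw [planeIntegral_apply]
  apply integral_nonneg_of_ae
  filter_upwards [ae_mem_ball_bergmanMeasure α] with z hz using h z hz

lemma planeIntegral_mono {α : ℝ} (hα : 1 < α) {p q : MvPolynomial (Fin 2) ℝ}
    (h : ∀ z ∈ ball (0:ℂ) 1, planeEval z p ≤ planeEval z q) :
    planeIntegral hα p ≤ planeIntegral hα q := by
  rw [← sub_nonneg, ← map_sub]
  exact planeIntegral_nonneg hα fun z hz => by simpa using h z hz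

/-- The polynomial `1 - x² - y²`. -/
noncomputable def diskPoly : MvPolynomial (Fin 2) ℝ :=
  1 - MvPolynomial.X 0 ^ 2 - MvPolynomial.X 1 ^ 2

@[simp] lemma planeEval_diskPoly (z : ℂ) : planeEval z diskPoly = 1 - ‖z‖ ^ 2 := by
  rw [diskPoly, Complex.sq_norm, Complex.normSq_apply]
  simp
  ring

lemma planeIntegral_succ {α : ℝ} (hα : 1 < α) (hα' : 1 < α + 1) (p : MvPolynomial (Fin 2) ℝ) :
    planeIntegral hα' p = α / (α - 1) * planeIntegral hα (diskPoly * p) := by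
  rw [planeIntegral_apply, planeIntegral_apply, integral_bergmanMeasure_succ hα]
  simp

lemma planeIntegral_by_parts {α : ℝ} (hα : 1 < α) (p : MvPolynomial (Fin 2) ℝ) (j : Fin 2) :
    planeIntegral hα (diskPoly * MvPolynomial.pderiv j p
      - 2 * (MvPolynomial.C α - 1) * (MvPolynomial.X j * p)) = 0 := by
  rw [planeIntegral_apply]
  have h2 : ∀ z, planeEval z 2 = 2 := fun z => planeEval_C z 2
  fin_cases j
  · simpa [h2] using integral_by_parts_re hα (continuous_planeEval p)
      (continuous_planeEval _) (hasDerivAt_planeEval_re p)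
  · simpa [h2] using integral_by_parts_im hα (continuous_planeEval p)
      (continuous_planeEval _) (hasDerivAt_planeEval_im p)

lemma pderiv_zero_diskPoly : MvPolynomial.pderiv 0 diskPoly = -2 * MvPolynomial.X 0 := by
  simp [diskPoly]

lemma pderiv_one_diskPoly : MvPolynomial.pderiv 1 diskPoly = -2 * MvPolynomial.X 1 := by
  simp [diskPoly]

/-- The divergence-type operator `(1 - |x|²) div A - 2 (α - 1) x · A` has mean zero. -/
lemma planeIntegral_div {α : ℝ} (hα : 1 < α) (p q : MvPolynomial (Fin 2) ℝ) :
    planeIntegral hα (diskPoly * (MvPolynomial.pderiv 0 p + MvPolynomial.pderiv 1 q)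
      - 2 * (MvPolynomial.C α - 1) * (MvPolynomial.X 0 * p + MvPolynomial.X 1 * q)) = 0 := by
  have h := congrArg₂ (· + ·) (planeIntegral_by_parts hα p 0) (planeIntegral_by_parts hα q 1)
  simp only [← map_add, add_zero] at h
  rw [← h]
  congr 1
  ring

/-- `Δ u`. -/
noncomputable def planeLaplacian (u : MvPolynomial (Fin 2) ℝ) : MvPolynomial (Fin 2) ℝ :=
  MvPolynomial.pderiv 0 (MvPolynomial.pderiv 0 u) + MvPolynomial.pderiv 1 (MvPolynomial.pderiv 1 u)

/-- `∇ u · ∇ v`. -/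
noncomputable def planeGrad (u v : MvPolynomial (Fin 2) ℝ) : MvPolynomial (Fin 2) ℝ :=
  MvPolynomial.pderiv 0 u * MvPolynomial.pderiv 0 v
    + MvPolynomial.pderiv 1 u * MvPolynomial.pderiv 1 v

/-- The squared norm of the Hessian of `u`. -/
noncomputable def planeHess (u : MvPolynomial (Fin 2) ℝ) : MvPolynomial (Fin 2) ℝ :=
  planeGrad (MvPolynomial.pderiv 0 u) (MvPolynomial.pderiv 0 u)
    + planeGrad (MvPolynomial.pderiv 1 u) (MvPolynomial.pderiv 1 u)

/-- The Jacobi operator `(1 - |x|²) Δ - 2 (α - 1) x · ∇`. -/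
noncomputable def jacobiOp (α : ℝ) (u : MvPolynomial (Fin 2) ℝ) : MvPolynomial (Fin 2) ℝ :=
  diskPoly * planeLaplacian u - 2 * (MvPolynomial.C α - 1) *
    (MvPolynomial.X 0 * MvPolynomial.pderiv 0 u + MvPolynomial.X 1 * MvPolynomial.pderiv 1 u)

lemma planeIntegral_mul_jacobiOp {α : ℝ} (hα : 1 < α) (u v : MvPolynomial (Fin 2) ℝ) :
    planeIntegral hα (u * jacobiOp α v) = - planeIntegral hα (diskPoly * planeGrad u v) := by
  rw [eq_neg_iff_add_eq_zero, ← map_add]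
  refine Eq.trans (congrArg _ ?_) (planeIntegral_div hα
    (u * MvPolynomial.pderiv 0 v) (u * MvPolynomial.pderiv 1 v))
  simp only [jacobiOp, planeGrad, planeLaplacian, MvPolynomial.pderiv_mul]
  ring

lemma MvPolynomial.pderiv_two {σ R : Type*} [CommRing R] (i : σ) :
    pderiv i (2 : MvPolynomial σ R) = 0 := by
  have : (2 : MvPolynomial σ R) = C 2 := (map_ofNat C 2).symm
  rw [this, pderiv_C]

lemma planeIntegral_bochner {α : ℝ} (hα : 1 < α) (u : MvPolynomial (Fin 2) ℝ) :
    α * planeIntegral hα (jacobiOp α u ^ 2)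
      = α * (2 * (α - 1)) * planeIntegral hα (diskPoly * planeGrad u u)
        + (α - 1) * planeIntegral hα (diskPoly ^ 2 * planeHess u)
        + planeIntegral hα (diskPoly ^ 2 * planeLaplacian u ^ 2) := by
  rw [← sub_eq_zero]
  simp only [← planeIntegral_C_mul, ← map_add, ← map_sub]
  set u0 := MvPolynomial.pderiv 0 u with hu0
  set u1 := MvPolynomial.pderiv 1 u with hu1
  set a : MvPolynomial (Fin 2) ℝ := MvPolynomial.C α with ha
  have hc : MvPolynomial.pderiv 1 u0 = MvPolynomial.pderiv 0 u1 :=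
    MvPolynomial.pderiv_pderiv_comm _ _ _
  rw [← planeIntegral_div hα
    (a * (jacobiOp α u * u0 - diskPoly * (u0 * MvPolynomial.pderiv 0 u0
        + u1 * MvPolynomial.pderiv 0 u1))
      + diskPoly * (u0 * MvPolynomial.pderiv 0 u0 + u1 * MvPolynomial.pderiv 0 u1
        - u0 * planeLaplacian u))
    (a * (jacobiOp α u * u1 - diskPoly * (u0 * MvPolynomial.pderiv 0 u1
        + u1 * MvPolynomial.pderiv 1 u1))
      + diskPoly * (u0 * MvPolynomial.pderiv 0 u1 + u1 * MvPolynomial.pderiv 1 u1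
        - u1 * planeLaplacian u))]
  congr 1
  have hd : MvPolynomial.pderiv 0 (MvPolynomial.pderiv 0 u1)
      = MvPolynomial.pderiv 1 (MvPolynomial.pderiv 0 u0) := by
    rw [← hc, MvPolynomial.pderiv_pderiv_comm]
  have hd' : MvPolynomial.pderiv 1 (MvPolynomial.pderiv 0 u1)
      = MvPolynomial.pderiv 0 (MvPolynomial.pderiv 1 u1) := by
    rw [MvPolynomial.pderiv_pderiv_comm]
  have h01 : MvPolynomial.pderiv (R := ℝ) (0 : Fin 2) (MvPolynomial.X 1) = 0 :=
    MvPolynomial.pderiv_X_of_ne (by decide)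
  have h10 : MvPolynomial.pderiv (R := ℝ) (1 : Fin 2) (MvPolynomial.X 0) = 0 :=
    MvPolynomial.pderiv_X_of_ne (by decide)
  simp only [jacobiOp, planeGrad, planeLaplacian, planeHess, MvPolynomial.pderiv_mul, map_sub,
    map_add, MvPolynomial.pderiv_C, MvPolynomial.pderiv_one, MvPolynomial.pderiv_two, map_mul,
    pderiv_zero_diskPoly, pderiv_one_diskPoly, MvPolynomial.pderiv_X_self, ← hu0, ← hu1, hc, hd,
    hd', h01, h10, ha, map_one, map_ofNat]
  simp only [diskPoly]
  ring

lemma planeIntegral_diskPoly_sq_laplacian {α : ℝ} (hα : 1 < α) (h : MvPolynomial (Fin 2) ℝ) :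
    planeIntegral hα (diskPoly ^ 2 * planeLaplacian h)
      = 4 * α * (α - 1) * planeIntegral hα h - 4 * α ^ 2 * planeIntegral hα (diskPoly * h) := by
  rw [← sub_eq_zero]
  simp only [← planeIntegral_C_mul, ← map_sub]
  have e := congrArg₂ (· + ·)
    (planeIntegral_div hα (diskPoly * MvPolynomial.pderiv 0 h) (diskPoly * MvPolynomial.pderiv 1 h))
    (congrArg (2 * α * ·)
      (planeIntegral_div hα (MvPolynomial.X 0 * h) (MvPolynomial.X 1 * h)))
  simp only [← planeIntegral_C_mul, ← map_add, mul_zero, add_zero] at e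
  rw [← e]
  congr 1
  simp only [planeLaplacian, MvPolynomial.pderiv_mul, pderiv_zero_diskPoly, pderiv_one_diskPoly,
    MvPolynomial.pderiv_X_self, map_mul, map_sub, map_pow, map_one, map_ofNat]
  simp only [diskPoly]
  ring

lemma planeIntegral_eq_zero {α : ℝ} (hα : 1 < α) {p : MvPolynomial (Fin 2) ℝ}
    (h : ∀ z ∈ ball (0:ℂ) 1, 0 ≤ planeEval z p) (h0 : planeIntegral hα p = 0) : p = 0 := by
  rw [planeIntegral_apply, integral_eq_zero_iff_of_nonneg_ae
    (by filter_upwards [ae_mem_ball_bergmanMeasure α] with z hz using h z hz)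
    ((continuous_planeEval p).integrable_bergmanMeasure hα), bergmanMeasure_eq_withDensity,
    Filter.EventuallyEq, ae_withDensity_iff (measurable_bergmanDensity α).ennreal_ofReal] at h0
  have hae : (fun z => planeEval z p) =ᵐ[volume.restrict (ball (0:ℂ) 1)] fun _ => 0 := by
    rw [Filter.EventuallyEq, ae_restrict_iff' measurableSet_ball]
    filter_upwards [h0] with z hz hzb
    apply hz
    rw [mem_ball_zero_iff] at hzb
    have h1 : 0 < 1 - ‖z‖ ^ 2 := by nlinarith [norm_nonneg z]
    have h2 := Real.rpow_pos_of_pos h1 (α - 2)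
    have h3 := Real.pi_pos
    have h4 : 0 < α - 1 := by linarith
    have : 0 < bergmanDensity α z := by
      rw [bergmanDensity, Set.indicator_of_mem (by simpa using hzb)]
      positivity
    simpa using this
  have heq := Measure.eqOn_open_of_ae_eq hae isOpen_ball
    (continuous_planeEval p).continuousOn continuousOn_const
  refine MvPolynomial.funext_set (fun _ => Set.Ioo (-1/2 : ℝ) (1/2))
    (fun _ => Set.Ioo_infinite (by norm_num)) fun x hx => ?_
  have h0 := hx 0 (Set.mem_univ _)
  have h1 := hx 1 (Set.mem_univ _)
  have hz : (⟨x 0, x 1⟩ : ℂ) ∈ ball (0:ℂ) 1 := by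
    rw [mem_ball_zero_iff, ← sq_lt_one_iff₀ (norm_nonneg _), Complex.sq_norm, Complex.normSq_mk]
    simp only [Set.mem_Ioo] at h0 h1
    nlinarith
  have := heq hz
  have hx' : (![x 0, x 1] : Fin 2 → ℝ) = x := by
    ext i; fin_cases i <;> rfl
  simpa [planeEval, hx'] using this

lemma continuous_planeEval_linearMap {k : ℕ} (l : (Fin k → ℝ) →ₗ[ℝ] MvPolynomial (Fin 2) ℝ) :
    Continuous fun x : (Fin k → ℝ) × ℂ => planeEval x.2 (l x.1) := by
  have : (fun x : (Fin k → ℝ) × ℂ => planeEval x.2 (l x.1))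
      = fun x => ∑ j, x.1 j * planeEval x.2 (l (Pi.single j 1)) := by
    ext x
    conv_lhs => rw [pi_eq_sum_univ' x.1]
    simp
  rw [this]
  refine continuous_finsetSum _ fun j _ => ?_
  exact ((continuous_apply j).comp continuous_fst).mul
    ((continuous_planeEval _).comp continuous_snd)

section deficit

variable {ι : Type} [Fintype ι]

/-- `|U|²`. -/
noncomputable def vecNormSq (U : ι → MvPolynomial (Fin 2) ℝ) : MvPolynomial (Fin 2) ℝ :=
  ∑ i, U i ^ 2

/-- `|∇U|²`. -/
noncomputable def vecGradSq (U : ι → MvPolynomial (Fin 2) ℝ) : MvPolynomial (Fin 2) ℝ :=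
  ∑ i, planeGrad (U i) (U i)

/-- The entropy of `h` with respect to the probability measure `μ`. -/
noncomputable def entropy {X : Type*} [MeasurableSpace X] (μ : Measure X) (h : X → ℝ) : ℝ :=
  ∫ x, h x * Real.log (h x) ∂μ - (∫ x, h x ∂μ) * Real.log (∫ x, h x ∂μ)

/-- The deficit in the logarithmic Sobolev inequality for the vector-valued polynomial `U`. -/
noncomputable def lsiDeficit {α : ℝ} (hα : 1 < α) (U : ι → MvPolynomial (Fin 2) ℝ) : ℝ :=
  1 / (α - 1) * planeIntegral hα (diskPoly * vecGradSq U)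
    - entropy (bergmanMeasure α) fun z => planeEval z (vecNormSq U)

lemma planeEval_vecNormSq (z : ℂ) (U : ι → MvPolynomial (Fin 2) ℝ) :
    planeEval z (vecNormSq U) = ∑ i, planeEval z (U i) ^ 2 := by
  simp [vecNormSq]

lemma planeEval_vecNormSq_nonneg (z : ℂ) (U : ι → MvPolynomial (Fin 2) ℝ) :
    0 ≤ planeEval z (vecNormSq U) := by
  rw [planeEval_vecNormSq]; positivity

lemma planeEval_vecGradSq (z : ℂ) (U : ι → MvPolynomial (Fin 2) ℝ) :
    planeEval z (vecGradSq U) = ∑ i, (planeEval z (MvPolynomial.pderiv 0 (U i)) ^ 2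
      + planeEval z (MvPolynomial.pderiv 1 (U i)) ^ 2) := by
  simp [vecGradSq, planeGrad, sq]

lemma planeEval_vecGradSq_nonneg (z : ℂ) (U : ι → MvPolynomial (Fin 2) ℝ) :
    0 ≤ planeEval z (vecGradSq U) := by
  rw [planeEval_vecGradSq]; positivity

lemma vecNormSq_smul (c : ℝ) (U : ι → MvPolynomial (Fin 2) ℝ) :
    vecNormSq (c • U) = c ^ 2 • vecNormSq U := by
  simp [vecNormSq, Finset.smul_sum, smul_pow]

lemma vecGradSq_smul (c : ℝ) (U : ι → MvPolynomial (Fin 2) ℝ) :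
    vecGradSq (c • U) = c ^ 2 • vecGradSq U := by
  simp only [vecGradSq, planeGrad, Finset.smul_sum, Pi.smul_apply, Derivation.map_smul]
  refine Finset.sum_congr rfl fun i _ => ?_
  simp only [smul_mul_smul_comm, smul_add, sq]

lemma entropy_const_mul {α : ℝ} (hα : 1 < α) {c : ℝ} (hc : 0 < c) {h : ℂ → ℝ}
    (hh : Continuous h) (h0 : ∫ z, h z ∂bergmanMeasure α ≠ 0) :
    entropy (bergmanMeasure α) (fun z => c * h z) = c * entropy (bergmanMeasure α) h := by
  unfold entropy
  have h1 : ∀ z, c * h z * Real.log (c * h z)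
      = c * (Real.log c * h z) + c * (h z * Real.log (h z)) := by
    intro z
    by_cases hz : h z = 0
    · simp [hz]
    · rw [Real.log_mul hc.ne' hz]; ring
  have i1 : Integrable (fun z => h z) (bergmanMeasure α) := hh.integrable_bergmanMeasure hα
  have i2 : Integrable (fun z => h z * Real.log (h z)) (bergmanMeasure α) :=
    (Real.continuous_mul_log.comp hh).integrable_bergmanMeasure hα
  simp_rw [h1]
  rw [integral_add ((i1.const_mul _).const_mul _) (i2.const_mul _), integral_const_mul,
    integral_const_mul, integral_const_mul, integral_const_mul, Real.log_mul hc.ne' h0]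
  ring

lemma planeIntegral_vecNormSq_pos {α : ℝ} (hα : 1 < α) {U : ι → MvPolynomial (Fin 2) ℝ}
    (hU : U ≠ 0) : 0 < planeIntegral hα (vecNormSq U) := by
  refine lt_of_le_of_ne (planeIntegral_nonneg hα fun z _ => planeEval_vecNormSq_nonneg z U) ?_
  intro h
  have h0 := planeIntegral_eq_zero hα (fun z _ => planeEval_vecNormSq_nonneg z U) h.symm
  apply hU
  ext1 i
  refine (pow_eq_zero_iff two_ne_zero).1
    (planeIntegral_eq_zero hα (p := U i ^ 2) (fun z _ => by simp; positivity) ?_)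
  refine le_antisymm ?_ (planeIntegral_nonneg hα fun z _ => by simp; positivity)
  have h2 : planeIntegral hα (vecNormSq U) = 0 := by rw [h0, map_zero]
  rw [← h2]
  refine planeIntegral_mono hα fun z _ => ?_
  rw [planeEval_vecNormSq, planeEval_pow]
  exact Finset.single_le_sum (f := fun i => planeEval z (U i) ^ 2) (fun _ _ => sq_nonneg _)
    (Finset.mem_univ i)

lemma lsiDeficit_zero {α : ℝ} (hα : 1 < α) :
    lsiDeficit hα (0 : ι → MvPolynomial (Fin 2) ℝ) = 0 := by
  simp [lsiDeficit, vecGradSq, planeGrad, vecNormSq, entropy]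

lemma lsiDeficit_smul {α : ℝ} (hα : 1 < α) {c : ℝ} (hc : c ≠ 0)
    (U : ι → MvPolynomial (Fin 2) ℝ) :
    lsiDeficit hα (c • U) = c ^ 2 * lsiDeficit hα U := by
  by_cases hU : U = 0
  · simp [hU, lsiDeficit_zero]
  have h0 := (planeIntegral_vecNormSq_pos hα hU).ne'
  rw [planeIntegral_apply] at h0
  unfold lsiDeficit
  rw [vecNormSq_smul, vecGradSq_smul, mul_smul_comm, map_smul, smul_eq_mul]
  simp only [planeEval_smul]
  rw [entropy_const_mul hα (by positivity) (continuous_planeEval _) h0]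
  ring

lemma continuous_lsiDeficit_linearMap {α : ℝ} (hα : 1 < α) {k : ℕ}
    (l : ι → (Fin k → ℝ) →ₗ[ℝ] MvPolynomial (Fin 2) ℝ) :
    Continuous (fun c => planeIntegral hα (vecNormSq fun i => l i c)) ∧
    Continuous (fun c => lsiDeficit hα fun i => l i c) := by
  have hs : Continuous fun x : (Fin k → ℝ) × ℂ => planeEval x.2 (vecNormSq fun i => l i x.1) := by
    simp only [planeEval_vecNormSq]
    exact continuous_finsetSum _ fun i _ => (continuous_planeEval_linearMap (l i)).pow 2
  have hg : Continuous fun x : (Fin k → ℝ) × ℂ =>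
      planeEval x.2 (diskPoly * vecGradSq fun i => l i x.1) := by
    simp only [planeEval_mul, planeEval_vecGradSq, planeEval_diskPoly]
    refine Continuous.mul (by fun_prop) (continuous_finsetSum _ fun i _ => ?_)
    exact ((continuous_planeEval_linearMap ((MvPolynomial.pderiv 0).toLinearMap ∘ₗ l i)).pow 2).add
      ((continuous_planeEval_linearMap ((MvPolynomial.pderiv 1).toLinearMap ∘ₗ l i)).pow 2)
  have h1 : Continuous (fun c => planeIntegral hα (vecNormSq fun i => l i c)) :=
    continuous_integral_bergmanMeasure hα (f := fun c z => planeEval z (vecNormSq fun i => l i c)) hs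
  refine ⟨h1, ?_⟩
  unfold lsiDeficit entropy
  refine Continuous.sub (continuous_const.mul ?_) (Continuous.sub ?_ ?_)
  · exact continuous_integral_bergmanMeasure hα
      (f := fun c z => planeEval z (diskPoly * vecGradSq fun i => l i c)) hg
  · exact continuous_integral_bergmanMeasure hα
      (f := fun c z => planeEval z (vecNormSq fun i => l i c)
        * Real.log (planeEval z (vecNormSq fun i => l i c))) (Real.continuous_mul_log.comp hs)
  · exact Real.continuous_mul_log.comp h1

lemma exists_min_lsiDeficit {α : ℝ} (hα : 1 < α) (d : ℕ) {W : ι → MvPolynomial (Fin 2) ℝ}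
    (hW : ∀ i, (W i).totalDegree ≤ d) (hneg : lsiDeficit hα W < 0) :
    ∃ m₀ < 0, ∃ U : ι → MvPolynomial (Fin 2) ℝ, (∀ i, (U i).totalDegree ≤ d) ∧
      planeIntegral hα (vecNormSq U) = 1 ∧ lsiDeficit hα U = m₀ ∧
      ∀ V : ι → MvPolynomial (Fin 2) ℝ, (∀ i, (V i).totalDegree ≤ d) →
        m₀ * planeIntegral hα (vecNormSq V) ≤ lsiDeficit hα V := by
  let E := ι → MvPolynomial.restrictTotalDegree (Fin 2) ℝ d
  let b := Module.finBasis ℝ E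
  let e : E ≃ₗ[ℝ] (Fin (Module.finrank ℝ E) → ℝ) := b.equivFun
  let l : ι → (Fin (Module.finrank ℝ E) → ℝ) →ₗ[ℝ] MvPolynomial (Fin 2) ℝ := fun i =>
    (Submodule.subtype _) ∘ₗ (LinearMap.proj i) ∘ₗ e.symm.toLinearMap
  let u : (Fin (Module.finrank ℝ E) → ℝ) → ι → MvPolynomial (Fin 2) ℝ := fun c i => l i c
  have hu_smul : ∀ (a : ℝ) c, u (a • c) = a • u c := fun a c => by
    ext1 i; simp [u]
  have hu_deg : ∀ c i, (u c i).totalDegree ≤ d := fun c i =>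
    (MvPolynomial.mem_restrictTotalDegree _ _ _).1 ((e.symm c) i).2
  have hu_surj : ∀ V : ι → MvPolynomial (Fin 2) ℝ, (∀ i, (V i).totalDegree ≤ d) →
      ∃ c, u c = V := fun V hV => by
    refine ⟨e fun i => ⟨V i, (MvPolynomial.mem_restrictTotalDegree _ _ _).2 (hV i)⟩, ?_⟩
    ext1 i
    simp only [u, l, LinearMap.comp_apply, LinearEquiv.coe_coe, LinearEquiv.symm_apply_apply]
    rfl
  have hu_ne : ∀ c, c ≠ 0 → u c ≠ 0 := by
    intro c hc h
    apply hc
    have : e.symm c = 0 := by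
      ext1 i
      apply Subtype.ext
      exact congrFun h i
    simpa using this
  obtain ⟨hc1, hc2⟩ := continuous_lsiDeficit_linearMap hα l
  have hpos : ∀ c ∈ sphere (0 : Fin (Module.finrank ℝ E) → ℝ) 1,
      0 < planeIntegral hα (vecNormSq (u c)) := fun c hc =>
    planeIntegral_vecNormSq_pos hα (hu_ne c (ne_zero_of_mem_unit_sphere ⟨c, hc⟩))
  obtain ⟨w, hw⟩ := hu_surj W hW
  have hw0 : w ≠ 0 := by
    rintro rfl
    have : W = 0 := by rw [← hw]; ext1 i; simp [u]
    rw [this, lsiDeficit_zero] at hneg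
    exact lt_irrefl _ hneg
  have hnorm : ∀ c : Fin (Module.finrank ℝ E) → ℝ, c ≠ 0 → ‖c‖⁻¹ • c ∈ sphere 0 1 := by
    intro c hc
    rw [mem_sphere_zero_iff_norm, norm_smul, norm_inv, norm_norm,
      inv_mul_cancel₀ (norm_ne_zero_iff.2 hc)]
  obtain ⟨c, hc, hmin⟩ := (isCompact_sphere (0 : Fin (Module.finrank ℝ E) → ℝ) 1).exists_isMinOn
    ⟨_, hnorm w hw0⟩ (f := fun c => lsiDeficit hα (u c) / planeIntegral hα (vecNormSq (u c)))
    (hc2.continuousOn.div hc1.continuousOn fun c hc => (hpos c hc).ne')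
  set m₀ := lsiDeficit hα (u c) / planeIntegral hα (vecNormSq (u c)) with hm₀
  have key : ∀ V : ι → MvPolynomial (Fin 2) ℝ, (∀ i, (V i).totalDegree ≤ d) →
        m₀ * planeIntegral hα (vecNormSq V) ≤ lsiDeficit hα V := by
    intro V hV
    obtain ⟨v, rfl⟩ := hu_surj V hV
    by_cases hv : v = 0
    · have : u v = 0 := by ext1 i; simp [u, hv]
      rw [this, lsiDeficit_zero]
      simp [vecNormSq]
    have hsph := hnorm v hv
    have h := hmin hsph
    have hp := hpos _ hsph
    simp only [Set.mem_ofPred_eq] at h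
    rw [← hm₀, le_div_iff₀ hp, hu_smul, vecNormSq_smul, map_smul, smul_eq_mul,
      lsiDeficit_smul hα (inv_ne_zero (norm_ne_zero_iff.2 hv))] at h
    have hn : 0 < (‖v‖⁻¹) ^ 2 := by positivity
    nlinarith
  have hMc := hpos c hc
  refine ⟨m₀, ?_, (Real.sqrt (planeIntegral hα (vecNormSq (u c))))⁻¹ • u c, ?_, ?_, ?_, key⟩
  · by_contra hcon
    push Not at hcon
    have := key W hW
    have h2 := planeIntegral_nonneg hα fun z _ => planeEval_vecNormSq_nonneg z W
    nlinarith [mul_nonneg hcon h2]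
  · intro i
    exact (MvPolynomial.totalDegree_smul_le _ _).trans (hu_deg c i)
  · rw [vecNormSq_smul, map_smul, smul_eq_mul, inv_pow, Real.sq_sqrt hMc.le,
      inv_mul_cancel₀ hMc.ne']
  · rw [lsiDeficit_smul hα (inv_ne_zero (Real.sqrt_ne_zero'.2 hMc)), inv_pow,
      Real.sq_sqrt hMc.le, hm₀]
    ring

end deficit

section

variable {ι : Type} [Fintype ι]

/-- `U · V`. -/
noncomputable def vecInner (U V : ι → MvPolynomial (Fin 2) ℝ) : MvPolynomial (Fin 2) ℝ :=
  ∑ i, U i * V i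

lemma one_sub_norm_sq_nonneg {z : ℂ} (hz : z ∈ ball (0:ℂ) 1) : 0 ≤ 1 - ‖z‖ ^ 2 := by
  rw [mem_ball_zero_iff] at hz
  nlinarith [norm_nonneg z]

lemma integral_by_parts_log {α : ℝ} (hα : 1 < α) {s : MvPolynomial (Fin 2) ℝ}
    (hs : ∀ z, 0 ≤ planeEval z s) {ε : ℝ} (hε : 0 < ε) (p q : MvPolynomial (Fin 2) ℝ) :
    ∫ z, (planeEval z (diskPoly * (MvPolynomial.pderiv 0 p + MvPolynomial.pderiv 1 q)
        - 2 * (MvPolynomial.C α - 1) * (MvPolynomial.X 0 * p + MvPolynomial.X 1 * q))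
          * Real.log (planeEval z s + ε)
      + planeEval z (diskPoly * (p * MvPolynomial.pderiv 0 s + q * MvPolynomial.pderiv 1 s))
          / (planeEval z s + ε)) ∂bergmanMeasure α = 0 := by
  have hne : ∀ z, planeEval z s + ε ≠ 0 := fun z => by linarith [hs z]
  have hlog : Continuous fun z => Real.log (planeEval z s + ε) :=
    Continuous.log (by fun_prop) hne
  have hinv : ∀ r : MvPolynomial (Fin 2) ℝ,
      Continuous fun z => planeEval z r / (planeEval z s + ε) := fun r =>
    Continuous.div (by fun_prop) (by fun_prop) hne
  have h0 := integral_by_parts_re hα (F := fun z => planeEval z p * Real.log (planeEval z s + ε))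
    (F' := fun z => planeEval z (MvPolynomial.pderiv 0 p) * Real.log (planeEval z s + ε)
      + planeEval z p * (planeEval z (MvPolynomial.pderiv 0 s) / (planeEval z s + ε)))
    (by fun_prop) ((by fun_prop : Continuous _).add ((continuous_planeEval p).mul (hinv _)))
    (fun z => by
      have h1 := hasDerivAt_planeEval_re p z
      have h2 := ((hasDerivAt_planeEval_re s z).add_const ε).log (by simpa using hne z)
      have h3 := h1.mul h2
      simp only [Complex.ofReal_zero, add_zero] at h3
      exact h3)
  have h1 := integral_by_parts_im hα (F := fun z => planeEval z q * Real.log (planeEval z s + ε))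
    (F' := fun z => planeEval z (MvPolynomial.pderiv 1 q) * Real.log (planeEval z s + ε)
      + planeEval z q * (planeEval z (MvPolynomial.pderiv 1 s) / (planeEval z s + ε)))
    (by fun_prop) ((by fun_prop : Continuous _).add ((continuous_planeEval q).mul (hinv _)))
    (fun z => by
      have h1 := hasDerivAt_planeEval_im q z
      have h2 := ((hasDerivAt_planeEval_im s z).add_const ε).log (by simpa using hne z)
      have h3 := h1.mul h2
      simp only [Complex.ofReal_zero, zero_mul, add_zero] at h3
      exact h3)
  rw [← add_zero (0:ℝ)]
  nth_rewrite 1 [← h0]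
  rw [← h1, ← integral_add]
  · congr 1
    ext z
    have h2 : planeEval z 2 = 2 := planeEval_C z 2
    simp only [planeEval_add, planeEval_sub, planeEval_mul, planeEval_diskPoly, planeEval_C,
      planeEval_one, planeEval_X_zero, planeEval_X_one, h2]
    ring
  · refine Continuous.integrable_bergmanMeasure hα ?_
    have := hinv (MvPolynomial.pderiv 0 s)
    fun_prop
  · refine Continuous.integrable_bergmanMeasure hα ?_
    have := hinv (MvPolynomial.pderiv 1 s)
    fun_prop

lemma pderiv_vecNormSq (j : Fin 2) (U : ι → MvPolynomial (Fin 2) ℝ) :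
    MvPolynomial.pderiv j (vecNormSq U)
      = 2 * vecInner U (fun i => MvPolynomial.pderiv j (U i)) := by
  simp only [vecNormSq, vecInner, map_sum, Finset.mul_sum]
  refine Finset.sum_congr rfl fun i _ => ?_
  rw [sq, MvPolynomial.pderiv_mul]
  ring

lemma pderiv_vecInner (j : Fin 2) (U V : ι → MvPolynomial (Fin 2) ℝ) :
    MvPolynomial.pderiv j (vecInner U V) = vecInner (fun i => MvPolynomial.pderiv j (U i)) V
      + vecInner U (fun i => MvPolynomial.pderiv j (V i)) := by
  simp only [vecInner, map_sum, ← Finset.sum_add_distrib, MvPolynomial.pderiv_mul]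

lemma neg_integral_inner_jacobiOp_log_le {α : ℝ} (hα : 1 < α) (U : ι → MvPolynomial (Fin 2) ℝ)
    {ε : ℝ} (hε : 0 < ε) :
    - ∫ z, planeEval z (vecInner U fun i => jacobiOp α (U i))
        * Real.log (planeEval z (vecNormSq U) + ε) ∂bergmanMeasure α
      ≤ ∫ z, planeEval z (diskPoly * vecGradSq U)
        * Real.log (planeEval z (vecNormSq U) + ε) ∂bergmanMeasure α
        + 2 * planeIntegral hα (diskPoly * vecGradSq U) := by
  have hs := fun z => planeEval_vecNormSq_nonneg z U
  have hne : ∀ z, planeEval z (vecNormSq U) + ε ≠ 0 := fun z => by linarith [hs z]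
  have hlog : Continuous fun z => Real.log (planeEval z (vecNormSq U) + ε) :=
    Continuous.log (by fun_prop) hne
  have h := integral_by_parts_log hα hs hε (vecInner U fun i => MvPolynomial.pderiv 0 (U i))
    (vecInner U fun i => MvPolynomial.pderiv 1 (U i))
  set P := vecInner U fun i => MvPolynomial.pderiv 0 (U i) with hP
  set Q := vecInner U fun i => MvPolynomial.pderiv 1 (U i) with hQ
  have e1 : diskPoly * (MvPolynomial.pderiv 0 P + MvPolynomial.pderiv 1 Q)
      - 2 * (MvPolynomial.C α - 1) * (MvPolynomial.X 0 * P + MvPolynomial.X 1 * Q)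
      = (vecInner U fun i => jacobiOp α (U i)) + diskPoly * vecGradSq U := by
    rw [hP, hQ, pderiv_vecInner, pderiv_vecInner]
    simp only [vecInner, vecGradSq, planeGrad, jacobiOp, planeLaplacian, Finset.mul_sum,
      ← Finset.sum_add_distrib, ← Finset.sum_sub_distrib]
    refine Finset.sum_congr rfl fun i _ => ?_
    ring
  rw [e1] at h
  have hdiv : Continuous fun z => planeEval z (diskPoly * (P * MvPolynomial.pderiv 0 (vecNormSq U)
      + Q * MvPolynomial.pderiv 1 (vecNormSq U))) / (planeEval z (vecNormSq U) + ε) :=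
    Continuous.div (by fun_prop) (by fun_prop) hne
  have i1 : Integrable (fun z => planeEval z (vecInner U fun i => jacobiOp α (U i))
        * Real.log (planeEval z (vecNormSq U) + ε)) (bergmanMeasure α) :=
    Continuous.integrable_bergmanMeasure hα (by fun_prop)
  have i2 : Integrable (fun z => planeEval z (diskPoly * vecGradSq U)
        * Real.log (planeEval z (vecNormSq U) + ε)) (bergmanMeasure α) :=
    Continuous.integrable_bergmanMeasure hα (by fun_prop)
  have i3 := hdiv.integrable_bergmanMeasure hα
  simp only [planeEval_add, add_mul] at h
  rw [integral_add (by exact i1.add i2) i3, integral_add i1 i2] at h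
  have h3 : ∫ z, planeEval z (diskPoly * (P * MvPolynomial.pderiv 0 (vecNormSq U)
      + Q * MvPolynomial.pderiv 1 (vecNormSq U))) / (planeEval z (vecNormSq U) + ε)
      ∂bergmanMeasure α ≤ 2 * planeIntegral hα (diskPoly * vecGradSq U) := by
    rw [planeIntegral_apply, ← integral_const_mul]
    refine integral_mono_ae i3 (((continuous_planeEval _).integrable_bergmanMeasure hα).const_mul _)
      ?_
    filter_upwards [ae_mem_ball_bergmanMeasure α] with z hz
    have hg := one_sub_norm_sq_nonneg hz
    have hpos : 0 < planeEval z (vecNormSq U) + ε := by linarith [hs z]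
    rw [div_le_iff₀ hpos, pderiv_vecNormSq, pderiv_vecNormSq, ← hP, ← hQ]
    have h2 : planeEval z 2 = 2 := planeEval_C z 2
    simp only [planeEval_mul, planeEval_add, planeEval_diskPoly, h2]
    have cs : planeEval z P ^ 2 + planeEval z Q ^ 2
        ≤ planeEval z (vecNormSq U) * planeEval z (vecGradSq U) := by
      rw [planeEval_vecGradSq, Finset.sum_add_distrib, mul_add, planeEval_vecNormSq]
      simp only [hP, hQ, vecInner, planeEval_sum, planeEval_mul]
      exact add_le_add (Finset.sum_mul_sq_le_sq_mul_sq _ _ _) (Finset.sum_mul_sq_le_sq_mul_sq _ _ _)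
    have hV := planeEval_vecGradSq_nonneg z U
    have : planeEval z P ^ 2 + planeEval z Q ^ 2
        ≤ (planeEval z (vecNormSq U) + ε) * planeEval z (vecGradSq U) := by
      nlinarith [mul_nonneg hε.le hV]
    nlinarith [mul_le_mul_of_nonneg_left this hg]
  linarith

/-- Gibbs variational principle, pointwise. -/
lemma mul_log_le_mul_log_add {x y : ℝ} (hx : 0 ≤ x) (hy : 0 < y) :
    x * Real.log y ≤ x * Real.log x + y - x := by
  rcases hx.eq_or_lt with rfl | hx
  · simp [hy.le]
  have h := Real.log_le_sub_one_of_pos (div_pos hy hx)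
  rw [Real.log_div hy.ne' hx.ne'] at h
  have := mul_le_mul_of_nonneg_left h hx.le
  have e : x * (y / x - 1) = y - x := by field_simp
  rw [e] at this
  linarith

end

section

variable {ι : Type} [Fintype ι]

lemma vecNormSq_add_smul (U H : ι → MvPolynomial (Fin 2) ℝ) (t : ℝ) :
    vecNormSq (U + t • H) = vecNormSq U + (2 * t) • vecInner U H + t ^ 2 • vecNormSq H := by
  simp only [vecNormSq, vecInner, Finset.smul_sum, ← Finset.sum_add_distrib, Pi.add_apply,
    Pi.smul_apply, MvPolynomial.smul_eq_C_mul, map_mul, map_pow, map_ofNat]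
  refine Finset.sum_congr rfl fun i _ => ?_
  ring

lemma vecGradSq_add_smul (U H : ι → MvPolynomial (Fin 2) ℝ) (t : ℝ) :
    vecGradSq (U + t • H) = vecGradSq U + (2 * t) • (∑ i, planeGrad (H i) (U i))
      + t ^ 2 • vecGradSq H := by
  simp only [vecGradSq, planeGrad, Finset.smul_sum, ← Finset.sum_add_distrib, Pi.add_apply,
    Pi.smul_apply, map_add, Derivation.map_smul]
  refine Finset.sum_congr rfl fun i _ => ?_
  simp only [MvPolynomial.smul_eq_C_mul, map_mul, map_pow, map_ofNat]
  ring

lemma planeIntegral_vecInner_jacobiOp {α : ℝ} (hα : 1 < α) (U : ι → MvPolynomial (Fin 2) ℝ) :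
    planeIntegral hα (vecInner U fun i => jacobiOp α (U i))
      = - planeIntegral hα (diskPoly * vecGradSq U) := by
  simp only [vecInner, vecGradSq, Finset.mul_sum, map_sum, planeIntegral_mul_jacobiOp,
    Finset.sum_neg_distrib]

lemma planeIntegral_grad_jacobiOp {α : ℝ} (hα : 1 < α) (U : ι → MvPolynomial (Fin 2) ℝ) :
    planeIntegral hα (diskPoly * ∑ i, planeGrad (jacobiOp α (U i)) (U i))
      = - planeIntegral hα (vecNormSq fun i => jacobiOp α (U i)) := by
  simp only [vecNormSq, sq, Finset.mul_sum, map_sum, planeIntegral_mul_jacobiOp,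
    Finset.sum_neg_distrib, neg_neg]

lemma first_order_of_isMin_aux {α : ℝ} (hα : 1 < α) {U H : ι → MvPolynomial (Fin 2) ℝ} {m₀ : ℝ}
    (hH : H = fun i => jacobiOp α (U i))
    (hM : planeIntegral hα (vecNormSq U) = 1) (hδ : lsiDeficit hα U = m₀)
    (hmin : ∀ t : ℝ, m₀ * planeIntegral hα (vecNormSq (U + t • H)) ≤ lsiDeficit hα (U + t • H))
    {t ε : ℝ} (ht : 0 < t) (ht1 : t ≤ 1) (hε : 0 < ε) :
    2 * t * (1 / (α - 1) * planeIntegral hα (vecNormSq H)) ≤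
      -(2 * t * ∫ z, planeEval z (vecInner U H) * Real.log (planeEval z (vecNormSq U) + ε)
        ∂bergmanMeasure α)
      + 2 * t * (m₀ * planeIntegral hα (diskPoly * vecGradSq U))
      + t ^ 2 * (-m₀ * planeIntegral hα (vecNormSq H)
          + 1 / (α - 1) * planeIntegral hα (diskPoly * vecGradSq H)
          + (2 * planeIntegral hα (diskPoly * vecGradSq U) + planeIntegral hα (vecNormSq H)) ^ 2)
      - t ^ 2 * (planeIntegral hα (vecNormSq H) * Real.log ε) + ε := by
  have hprob := isProbabilityMeasure_bergmanMeasure hα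
  have hm := hmin t
  have hMt : planeIntegral hα (vecNormSq (U + t • H))
      = 1 - 2 * t * planeIntegral hα (diskPoly * vecGradSq U)
        + t ^ 2 * planeIntegral hα (vecNormSq H) := by
    rw [vecNormSq_add_smul, map_add, map_add, map_smul, map_smul, hM]
    nth_rewrite 1 [hH]
    rw [planeIntegral_vecInner_jacobiOp]
    simp only [smul_eq_mul]; ring
  have hEt : planeIntegral hα (diskPoly * vecGradSq (U + t • H))
      = planeIntegral hα (diskPoly * vecGradSq U) - 2 * t * planeIntegral hα (vecNormSq H)
        + t ^ 2 * planeIntegral hα (diskPoly * vecGradSq H) := by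
    rw [vecGradSq_add_smul, mul_add, mul_add, mul_smul_comm, mul_smul_comm, map_add, map_add,
      map_smul, map_smul]
    have : planeIntegral hα (diskPoly * ∑ i, planeGrad (H i) (U i))
        = - planeIntegral hα (vecNormSq H) := by
      rw [hH]; exact planeIntegral_grad_jacobiOp hα U
    rw [this]
    simp only [smul_eq_mul]; ring
  set N := planeIntegral hα (diskPoly * vecGradSq U) with hN
  set LL := planeIntegral hα (vecNormSq H) with hLL
  have hN0 : 0 ≤ N := planeIntegral_nonneg hα fun z hz => by
    rw [planeEval_mul, planeEval_diskPoly]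
    exact mul_nonneg (one_sub_norm_sq_nonneg hz) (planeEval_vecGradSq_nonneg z U)
  have hLL0 : 0 ≤ LL := planeIntegral_nonneg hα fun z _ => planeEval_vecNormSq_nonneg z H
  set b : ℂ → ℝ := fun z => planeEval z (vecNormSq U) + ε with hb
  have hbpos : ∀ z, 0 < b z := fun z => by
    have := planeEval_vecNormSq_nonneg z U
    simp only [hb]; linarith
  have hlog : Continuous fun z => Real.log (b z) :=
    Continuous.log (by fun_prop) fun z => (hbpos z).ne'
  set Wt := vecNormSq (U + t • H) with hWt
  have hWt0 : ∀ z, 0 ≤ planeEval z Wt := fun z => planeEval_vecNormSq_nonneg z _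
  have hMt0 : 0 ≤ planeIntegral hα Wt := planeIntegral_nonneg hα fun z _ => hWt0 z
  have hWc : Continuous fun z => planeEval z Wt * Real.log (planeEval z Wt) :=
    Real.continuous_mul_log.comp (continuous_planeEval Wt)
  have hUc : Continuous fun z =>
      planeEval z (vecNormSq U) * Real.log (planeEval z (vecNormSq U)) :=
    Real.continuous_mul_log.comp (continuous_planeEval _)
  -- lower bound for the entropy at time `t`
  have hent : ∫ z, planeEval z (vecNormSq U) * Real.log (b z) ∂bergmanMeasure α
      + 2 * t * ∫ z, planeEval z (vecInner U H) * Real.log (b z) ∂bergmanMeasure α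
      + t ^ 2 * (LL * Real.log ε) + (planeIntegral hα Wt - 1 - ε)
      ≤ ∫ z, planeEval z Wt * Real.log (planeEval z Wt) ∂bergmanMeasure α := by
    have i1 : Integrable (fun z => planeEval z (vecNormSq U) * Real.log (b z))
      (bergmanMeasure α) := Continuous.integrable_bergmanMeasure hα (by fun_prop)
    have i2 : Integrable (fun z => 2 * t * (planeEval z (vecInner U H) * Real.log (b z)))
      (bergmanMeasure α) := Continuous.integrable_bergmanMeasure hα (by fun_prop)
    have i3 : Integrable (fun z => t ^ 2 * (planeEval z (vecNormSq H) * Real.log ε))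
      (bergmanMeasure α) := Continuous.integrable_bergmanMeasure hα (by fun_prop)
    have i4 : Integrable (fun z => planeEval z Wt - planeEval z (vecNormSq U) - ε)
      (bergmanMeasure α) := Continuous.integrable_bergmanMeasure hα (by fun_prop)
    have j1 : Integrable (fun z => planeEval z Wt)
      (bergmanMeasure α) := Continuous.integrable_bergmanMeasure hα (by fun_prop)
    have j2 : Integrable (fun z => planeEval z (vecNormSq U))
      (bergmanMeasure α) := Continuous.integrable_bergmanMeasure hα (by fun_prop)
    have e4 : ∫ z, (planeEval z Wt - planeEval z (vecNormSq U) - ε) ∂bergmanMeasure α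
        = planeIntegral hα Wt - 1 - ε := by
      rw [integral_sub (by exact j1.sub j2) (integrable_const _), integral_sub j1 j2,
        ← planeIntegral_apply hα, ← planeIntegral_apply hα, hM]
      simp
    have e3 : ∫ z, t ^ 2 * (planeEval z (vecNormSq H) * Real.log ε) ∂bergmanMeasure α
        = t ^ 2 * (LL * Real.log ε) := by
      rw [integral_const_mul, integral_mul_const, ← planeIntegral_apply hα]
    rw [← e4, ← e3, ← integral_const_mul, ← integral_add i1 i2,
      ← integral_add (by exact i1.add i2) i3, ← integral_add (by exact (i1.add i2).add i3) i4]
    refine integral_mono (by exact ((i1.add i2).add i3).add i4)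
      (hWc.integrable_bergmanMeasure hα) fun z => ?_
    have h1 := mul_log_le_mul_log_add (hWt0 z) (hbpos z)
    have h2 : planeEval z Wt = planeEval z (vecNormSq U)
        + 2 * t * planeEval z (vecInner U H) + t ^ 2 * planeEval z (vecNormSq H) := by
      rw [hWt, vecNormSq_add_smul]; simp
    have h3 : Real.log ε ≤ Real.log (b z) := Real.log_le_log hε (by
      have := planeEval_vecNormSq_nonneg z U
      simp only [hb]; linarith)
    have h4 := mul_le_mul_of_nonneg_left h3
      (mul_nonneg (sq_nonneg t) (planeEval_vecNormSq_nonneg z H))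
    have h5 : planeEval z Wt * Real.log (b z) = planeEval z (vecNormSq U) * Real.log (b z)
        + 2 * t * (planeEval z (vecInner U H) * Real.log (b z))
        + t ^ 2 * planeEval z (vecNormSq H) * Real.log (b z) := by
      rw [h2]; ring
    have h6 : b z = planeEval z (vecNormSq U) + ε := rfl
    simp only
    linarith
  have hent0 : ∫ z, planeEval z (vecNormSq U) * Real.log (planeEval z (vecNormSq U))
        ∂bergmanMeasure α
      ≤ ∫ z, planeEval z (vecNormSq U) * Real.log (b z) ∂bergmanMeasure α := by
    refine integral_mono (hUc.integrable_bergmanMeasure hα)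
      (Continuous.integrable_bergmanMeasure hα (by fun_prop)) fun z => ?_
    have h0 := planeEval_vecNormSq_nonneg z U
    rcases h0.eq_or_lt with h | h
    · simp [← h]
    · exact mul_le_mul_of_nonneg_left (Real.log_le_log h (by simp only [hb]; linarith)) h0
  have hMlog : planeIntegral hα Wt * Real.log (planeIntegral hα Wt)
      ≤ (planeIntegral hα Wt - 1) + (planeIntegral hα Wt - 1) ^ 2 := by
    rcases hMt0.eq_or_lt with h | h
    · simp [← h]
    · nlinarith [mul_le_mul_of_nonneg_left (Real.log_le_sub_one_of_pos h) hMt0]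
  have hx : (planeIntegral hα Wt - 1) ^ 2 ≤ t ^ 2 * (2 * N + LL) ^ 2 := by
    rw [hMt, ← mul_pow]
    apply sq_le_sq'
    · nlinarith [mul_nonneg ht.le hLL0, mul_nonneg (sq_nonneg t) hLL0]
    · nlinarith [mul_nonneg ht.le hLL0, mul_nonneg ht.le hN0,
        mul_nonneg (mul_nonneg ht.le hLL0) (sub_nonneg.2 ht1)]
  unfold lsiDeficit entropy at hm hδ
  simp only [← planeIntegral_apply hα] at hm hδ
  rw [hM, Real.log_one, ← hN] at hδ
  rw [hEt] at hm
  rw [hMt] at hm hMlog hent hx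
  nlinarith

lemma first_order_of_isMin {α : ℝ} (hα : 1 < α) {U : ι → MvPolynomial (Fin 2) ℝ} {m₀ : ℝ}
    (hM : planeIntegral hα (vecNormSq U) = 1) (hδ : lsiDeficit hα U = m₀)
    (hmin : ∀ t : ℝ, m₀ * planeIntegral hα (vecNormSq (U + t • fun i => jacobiOp α (U i)))
      ≤ lsiDeficit hα (U + t • fun i => jacobiOp α (U i))) {η : ℝ} (hη : 0 < η) :
    ∃ ε, 0 < ε ∧ ε < η ∧
      1 / (α - 1) * planeIntegral hα (vecNormSq fun i => jacobiOp α (U i)) ≤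
        ∫ z, planeEval z (diskPoly * vecGradSq U) * Real.log (planeEval z (vecNormSq U) + ε)
          ∂bergmanMeasure α
        + (2 + m₀) * planeIntegral hα (diskPoly * vecGradSq U) + η := by
  set H := fun i => jacobiOp α (U i) with hH
  set LL := planeIntegral hα (vecNormSq H) with hLL
  have hLL0 : 0 ≤ LL := planeIntegral_nonneg hα fun z _ => planeEval_vecNormSq_nonneg z H
  set N := planeIntegral hα (diskPoly * vecGradSq U) with hN
  set C := -m₀ * LL + 1 / (α - 1) * planeIntegral hα (diskPoly * vecGradSq H)
    + (2 * N + LL) ^ 2 with hC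
  set B := |C| + 2 * LL + 1 with hB
  have hB1 : 1 ≤ B := by have := abs_nonneg C; linarith
  set τ := min (1 / 2) (η / (2 * B)) with hτ
  have hτ0 : 0 < τ := lt_min (by norm_num) (by positivity)
  have hτ1 : τ ≤ 1 / 2 := min_le_left _ _
  have hτB : τ * B ≤ η / 2 := by
    have : τ ≤ η / (2 * B) := min_le_right _ _
    calc τ * B ≤ η / (2 * B) * B := by gcongr
      _ = η / 2 := by field_simp
  have hτ2 : τ ^ 2 ≤ τ := by nlinarith
  have hτ4 : τ ^ 4 ≤ τ := by nlinarith [sq_nonneg τ]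
  refine ⟨τ ^ 4, by positivity, by nlinarith, ?_⟩
  have h := first_order_of_isMin_aux hα hH hM hδ hmin (t := τ ^ 2) (ε := τ ^ 4) (by positivity)
    (by nlinarith) (by positivity)
  have h2 := neg_integral_inner_jacobiOp_log_le hα U (ε := τ ^ 4) (by positivity)
  rw [← hH, ← hN] at h2
  rw [← hN, ← hLL, ← hC] at h
  set I₁ := ∫ z, planeEval z (vecInner U H) * Real.log (planeEval z (vecNormSq U) + τ ^ 4)
        ∂bergmanMeasure α with hI₁
  have hlog : -Real.log (τ ^ 4) ≤ 4 / τ := by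
    rw [Real.log_pow, ← mul_neg, ← Real.log_inv]
    have := Real.log_le_sub_one_of_pos (inv_pos.2 hτ0)
    push_cast
    rw [div_eq_mul_inv]
    linarith
  have h3 : - (LL * Real.log (τ ^ 4)) ≤ LL * (4 / τ) := by
    have := mul_le_mul_of_nonneg_left hlog hLL0
    rwa [mul_neg] at this
  clear_value I₁ LL N C B τ
  have h4 : (1 / (α - 1) * LL) ≤ - I₁ + m₀ * N + τ ^ 2 * |C| / 2 + 2 * τ * LL + τ ^ 2 / 2 := by
    have hp : 0 < 2 * τ ^ 2 := by positivity
    refine le_of_mul_le_mul_left ?_ hp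
    have e : (τ ^ 2) ^ 2 * (LL * (4 / τ)) = 2 * τ ^ 2 * (2 * τ * LL) := by
      field_simp; ring
    have h5 := mul_le_mul_of_nonneg_left h3 (sq_nonneg (τ ^ 2))
    have h6 := mul_le_mul_of_nonneg_left (le_abs_self C) (sq_nonneg (τ ^ 2))
    rw [e] at h5
    have e2 : 2 * τ ^ 2 * (-I₁ + m₀ * N + τ ^ 2 * |C| / 2 + 2 * τ * LL + τ ^ 2 / 2)
        = -(2 * τ ^ 2 * I₁) + 2 * τ ^ 2 * (m₀ * N) + (τ ^ 2) ^ 2 * |C| + 2 * τ ^ 2 * (2 * τ * LL)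
          + τ ^ 4 := by ring
    rw [e2]
    linarith
  have h5 : τ ^ 2 * |C| / 2 + 2 * τ * LL + τ ^ 2 / 2 ≤ τ * B := by
    have := mul_le_mul_of_nonneg_right hτ2 (abs_nonneg C)
    have h6 := mul_nonneg hτ0.le (abs_nonneg C)
    have h7 : τ * B = τ * |C| + 2 * τ * LL + τ := by rw [hB]; ring
    linarith
  linarith

end

lemma log_bounds_absurd {α N T S K k P m₀ : ℝ} (hα : 1 < α) (hN : 0 < N) (hT : 0 < T)
    (hS : 0 ≤ S) (hK : 0 < K) (hk : k ≤ K) (hP : P ^ 2 ≤ k * S)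
    (hrel : 2 * (T + P) = 4 * α * (α - 1) - 4 * α ^ 2 * K) (hm : m₀ < 0)
    (h1 : S / (α * (α - 1)) ≤ N * Real.log (α / (α - 1) * K) + m₀ * N)
    (h2 : S / (α * (α - 1)) ≤ N * Real.log (α / (α - 1) * T / N) + m₀ * N) : False := by
  have hα0 : 0 < α := by linarith
  have hα1 : 0 < α - 1 := by linarith
  obtain ⟨κ, hκ⟩ : ∃ κ, κ = α / (α - 1) * K := ⟨_, rfl⟩
  obtain ⟨R, hR⟩ : ∃ R, R = α / (α - 1) * T / N := ⟨_, rfl⟩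
  have hKκ : K = (α - 1) / α * κ := by rw [hκ]; field_simp
  have hTR : T = (α - 1) / α * N * R := by rw [hR]; field_simp
  rw [← hκ] at h1
  rw [← hR] at h2
  have hκ0 : 0 < κ := by rw [hκ]; positivity
  have hR0 : 0 < R := by rw [hR]; positivity
  have hS' : 0 ≤ S / (α * (α - 1)) := by positivity
  obtain ⟨S', hS'e⟩ : ∃ S', S' = S / (α * (α - 1)) / N := ⟨_, rfl⟩
  have hSS : S = α * (α - 1) * N * S' := by rw [hS'e]; field_simp
  have hS0 : 0 ≤ S' := by rw [hS'e]; positivity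
  have g1 : S' < Real.log κ := by
    rw [hS'e, div_lt_iff₀ hN]; nlinarith
  have g2 : S' < Real.log R := by
    rw [hS'e, div_lt_iff₀ hN]; nlinarith
  have hκ1 : 1 < κ := (Real.log_pos_iff hκ0.le).1 (by linarith)
  have hR1 : 1 < R := (Real.log_pos_iff hR0.le).1 (by linarith)
  have hPe : P = -(T + 2 * α * (α - 1) * (κ - 1)) := by
    have : α ^ 2 * K = α * (α - 1) * κ := by rw [hKκ]; field_simp
    linarith
  have hP2 : 8 * α * (α - 1) * T * (κ - 1) ≤ K * S := by
    have : k * S ≤ K * S := mul_le_mul_of_nonneg_right hk hS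
    have hsq : P ^ 2 = 8 * α * (α - 1) * T * (κ - 1)
        + (T - 2 * α * (α - 1) * (κ - 1)) ^ 2 := by rw [hPe]; ring
    linarith [sq_nonneg (T - 2 * α * (α - 1) * (κ - 1))]
  have key : 8 * R * (κ - 1) ≤ κ * S' := by
    rw [hTR, hKκ, hSS] at hP2
    have hpos : 0 < (α - 1) ^ 2 * N := by positivity
    have e1 : 8 * α * (α - 1) * ((α - 1) / α * N * R) * (κ - 1)
        = (α - 1) ^ 2 * N * (8 * R * (κ - 1)) := by field_simp
    have e2 : (α - 1) / α * κ * (α * (α - 1) * N * S') = (α - 1) ^ 2 * N * (κ * S') := by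
      field_simp
    rw [e1, e2] at hP2
    exact le_of_mul_le_mul_left hP2 hpos
  have l1 := Real.log_le_sub_one_of_pos hκ0
  have l2 := Real.log_le_sub_one_of_pos hR0
  rcases le_or_gt κ 8 with h8 | h8
  · have a1 : κ * S' < κ * (κ - 1) := mul_lt_mul_of_pos_left (by linarith) hκ0
    nlinarith [mul_pos (sub_pos.2 hκ1) (sub_pos.2 hR1), mul_nonneg (sub_pos.2 hκ1).le
      (sub_nonneg.2 h8)]
  · have a1 : κ * S' < κ * R := mul_lt_mul_of_pos_left (by linarith) hκ0
    nlinarith [mul_pos hR0 (sub_pos.2 h8)]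

section

variable {ι : Type} [Fintype ι]

/-- The gradient of `U` as a vector-valued polynomial. -/
noncomputable def vecGradient (U : ι → MvPolynomial (Fin 2) ℝ) :
    ι ⊕ ι → MvPolynomial (Fin 2) ℝ :=
  Sum.elim (fun i => MvPolynomial.pderiv 0 (U i)) (fun i => MvPolynomial.pderiv 1 (U i))

lemma vecNormSq_vecGradient (U : ι → MvPolynomial (Fin 2) ℝ) :
    vecNormSq (vecGradient U) = vecGradSq U := by
  simp [vecNormSq, vecGradient, vecGradSq, planeGrad, Finset.sum_add_distrib, sq]

lemma vecGradSq_vecGradient (U : ι → MvPolynomial (Fin 2) ℝ) :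
    vecGradSq (vecGradient U) = ∑ i, planeHess (U i) := by
  simp [vecGradient, vecGradSq, planeHess, Finset.sum_add_distrib]

lemma entropy_gradient_le {α : ℝ} (hα : 1 < α) (hα' : 1 < α + 1)
    (U : ι → MvPolynomial (Fin 2) ℝ) (h : 0 ≤ lsiDeficit hα' (vecGradient U)) :
    ∫ z, planeEval z (diskPoly * vecGradSq U) * Real.log (planeEval z (vecGradSq U))
        ∂bergmanMeasure α
      - planeIntegral hα (diskPoly * vecGradSq U)
        * Real.log (α / (α - 1) * planeIntegral hα (diskPoly * vecGradSq U))
      ≤ 1 / α * planeIntegral hα (diskPoly ^ 2 * ∑ i, planeHess (U i)) := by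
  have hα1 : 0 < α - 1 := by linarith
  have hα0 : 0 < α := by linarith
  unfold lsiDeficit entropy at h
  rw [vecNormSq_vecGradient, vecGradSq_vecGradient, planeIntegral_succ hα hα',
    integral_bergmanMeasure_succ hα, ← planeIntegral_apply hα', planeIntegral_succ hα hα',
    add_sub_cancel_right, ← mul_assoc diskPoly, ← sq] at h
  have e : ∀ z, planeEval z (diskPoly * vecGradSq U) * Real.log (planeEval z (vecGradSq U))
      = (1 - ‖z‖ ^ 2) * (planeEval z (vecGradSq U) * Real.log (planeEval z (vecGradSq U))) := by
    intro z
    rw [planeEval_mul, planeEval_diskPoly]; ring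
  simp only [e]
  have hpos : 0 < α / (α - 1) := by positivity
  refine le_of_mul_le_mul_left ?_ hpos
  nlinarith

lemma planeIntegral_diskPoly {α : ℝ} (hα : 1 < α) :
    planeIntegral hα diskPoly = (α - 1) / α := by
  have hα' : 1 < α + 1 := by linarith
  have h := planeIntegral_succ hα hα' 1
  have := isProbabilityMeasure_bergmanMeasure hα'
  rw [mul_one, planeIntegral_apply] at h
  simp only [planeEval_one, integral_const, smul_eq_mul, mul_one, probReal_univ] at h
  have : α - 1 ≠ 0 := by linarith
  have : α ≠ 0 := by linarith
  field_simp at h ⊢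
  linarith

lemma continuous_mul_log_planeEval (p q : MvPolynomial (Fin 2) ℝ) :
    Continuous fun z => planeEval z (q * p) * Real.log (planeEval z p) := by
  have : (fun z => planeEval z (q * p) * Real.log (planeEval z p))
      = fun z => planeEval z q * (planeEval z p * Real.log (planeEval z p)) := by
    ext z; rw [planeEval_mul]; ring
  rw [this]
  exact (continuous_planeEval q).mul (Real.continuous_mul_log.comp (continuous_planeEval p))

lemma gibbs_weighted {α : ℝ} (hα : 1 < α) {V s : MvPolynomial (Fin 2) ℝ}
    (hV : ∀ z, 0 ≤ planeEval z V) (hs : ∀ z, 0 ≤ planeEval z s)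
    (hN : 0 < planeIntegral hα (diskPoly * V)) {ε : ℝ} (hε : 0 < ε) :
    ∫ z, planeEval z (diskPoly * V) * Real.log (planeEval z s + ε) ∂bergmanMeasure α
      ≤ ∫ z, planeEval z (diskPoly * V) * Real.log (planeEval z V) ∂bergmanMeasure α
        - planeIntegral hα (diskPoly * V)
          * Real.log (α / (α - 1) * planeIntegral hα (diskPoly * V))
        + planeIntegral hα (diskPoly * V)
          * Real.log (α / (α - 1) * planeIntegral hα (diskPoly * s) + ε) := by
  have hα1 : 0 < α - 1 := by linarith
  have hα0 : 0 < α := by linarith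
  set N := planeIntegral hα (diskPoly * V) with hNd
  set K := planeIntegral hα (diskPoly * s) with hKd
  have hK0 : 0 ≤ K := planeIntegral_nonneg hα fun z hz => by
    rw [planeEval_mul, planeEval_diskPoly]
    exact mul_nonneg (one_sub_norm_sq_nonneg hz) (hs z)
  have hκ : 0 < α / (α - 1) * K + ε := by positivity
  set θ := α / (α - 1) * N / (α / (α - 1) * K + ε) with hθ
  have hθ0 : 0 < θ := by positivity
  have hlog : Continuous fun z => Real.log (planeEval z s + ε) :=
    Continuous.log (by fun_prop) fun z => by linarith [hs z]
  have i1 : Integrable (fun z => planeEval z (diskPoly * V) * Real.log (planeEval z s + ε))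
    (bergmanMeasure α) := Continuous.integrable_bergmanMeasure hα (by fun_prop)
  have i2 : Integrable (fun z => planeEval z (diskPoly * V) * Real.log (planeEval z V))
    (bergmanMeasure α) := (continuous_mul_log_planeEval V diskPoly).integrable_bergmanMeasure hα
  set r : MvPolynomial (Fin 2) ℝ := MvPolynomial.C θ * (diskPoly * s)
    + MvPolynomial.C (θ * ε) * diskPoly - MvPolynomial.C (1 + Real.log θ) * (diskPoly * V) with hr
  have i3 : Integrable (fun z => planeEval z r) (bergmanMeasure α) :=
    (continuous_planeEval r).integrable_bergmanMeasure hα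
  have e3 : ∫ z, planeEval z r ∂bergmanMeasure α
      = - N * Real.log (α / (α - 1) * N) + N * Real.log (α / (α - 1) * K + ε) := by
    rw [← planeIntegral_apply hα, hr, map_sub, map_add, planeIntegral_C_mul, planeIntegral_C_mul,
      planeIntegral_C_mul, planeIntegral_diskPoly, ← hNd, ← hKd]
    have : θ * K + θ * ε * ((α - 1) / α) = N := by rw [hθ]; field_simp
    rw [this, hθ, Real.log_div (by positivity) hκ.ne']
    ring
  have : ∫ z, planeEval z (diskPoly * V) * Real.log (planeEval z s + ε) ∂bergmanMeasure α
      ≤ ∫ z, planeEval z (diskPoly * V) * Real.log (planeEval z V) ∂bergmanMeasure α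
        + ∫ z, planeEval z r ∂bergmanMeasure α := by
    rw [← integral_add i2 i3]
    refine integral_mono_ae i1 (by exact i2.add i3) ?_
    filter_upwards [ae_mem_ball_bergmanMeasure α] with z hz
    have hg := one_sub_norm_sq_nonneg hz
    have hsp : 0 < planeEval z s + ε := by linarith [hs z]
    have h := mul_log_le_mul_log_add (hV z) (mul_pos hθ0 hsp)
    rw [Real.log_mul hθ0.ne' hsp.ne'] at h
    have h2 := mul_le_mul_of_nonneg_left h hg
    simp only [hr, planeEval_mul, planeEval_add, planeEval_sub, planeEval_C, planeEval_diskPoly]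
    linarith
  rw [e3] at this
  linarith

lemma gibbs_unweighted {α : ℝ} (hα : 1 < α) {V s : MvPolynomial (Fin 2) ℝ}
    (hV : ∀ z, 0 ≤ planeEval z V) (hs : ∀ z, 0 ≤ planeEval z s)
    (hM : planeIntegral hα s = 1)
    (hN : 0 < planeIntegral hα (diskPoly * V)) (hT : 0 < planeIntegral hα (diskPoly ^ 2 * V))
    {ε : ℝ} (hε : 0 < ε) :
    ∫ z, planeEval z (diskPoly * V) * Real.log (planeEval z s + ε) ∂bergmanMeasure α
      ≤ ∫ z, planeEval z (diskPoly * V) * Real.log (planeEval z V) ∂bergmanMeasure α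
        - planeIntegral hα (diskPoly * V)
          * Real.log (α / (α - 1) * planeIntegral hα (diskPoly * V))
        + planeIntegral hα (diskPoly * V) * (Real.log (1 + ε) +
          Real.log (α / (α - 1) * planeIntegral hα (diskPoly ^ 2 * V)
            / planeIntegral hα (diskPoly * V))) := by
  have hprob := isProbabilityMeasure_bergmanMeasure hα
  have hα1 : 0 < α - 1 := by linarith
  have hα0 : 0 < α := by linarith
  set N := planeIntegral hα (diskPoly * V) with hNd
  set T := planeIntegral hα (diskPoly ^ 2 * V) with hTd
  set θ := N / (1 + ε) with hθ
  have hθ0 : 0 < θ := by positivity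
  set b := T / N with hb
  have hb0 : 0 < b := by positivity
  have hlog : Continuous fun z => Real.log (planeEval z s + ε) :=
    Continuous.log (by fun_prop) fun z => by linarith [hs z]
  have i1 : Integrable (fun z => planeEval z (diskPoly * V) * Real.log (planeEval z s + ε))
    (bergmanMeasure α) := Continuous.integrable_bergmanMeasure hα (by fun_prop)
  have i2 : Integrable (fun z => planeEval z (diskPoly * V) * Real.log (planeEval z V))
    (bergmanMeasure α) := (continuous_mul_log_planeEval V diskPoly).integrable_bergmanMeasure hα
  set r : MvPolynomial (Fin 2) ℝ := MvPolynomial.C θ * s + MvPolynomial.C (θ * ε) * 1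
    + MvPolynomial.C b⁻¹ * (diskPoly ^ 2 * V)
    - MvPolynomial.C (2 + Real.log θ - Real.log b) * (diskPoly * V) with hr
  have i3 : Integrable (fun z => planeEval z r) (bergmanMeasure α) :=
    (continuous_planeEval r).integrable_bergmanMeasure hα
  have e1 : planeIntegral hα 1 = 1 := by
    rw [planeIntegral_apply]; simp
  have e3 : ∫ z, planeEval z r ∂bergmanMeasure α
      = - N * Real.log (α / (α - 1) * N) + N * (Real.log (1 + ε) +
          Real.log (α / (α - 1) * T / N)) := by
    rw [← planeIntegral_apply hα, hr, map_sub, map_add, map_add, planeIntegral_C_mul,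
      planeIntegral_C_mul, planeIntegral_C_mul, planeIntegral_C_mul, ← hNd, ← hTd, hM, e1]
    have h1 : θ * 1 + θ * ε * 1 = N := by rw [hθ]; field_simp
    have h2 : b⁻¹ * T = N := by rw [hb]; field_simp
    rw [h1, h2, hθ, hb, Real.log_div hN.ne' (by positivity), Real.log_div hT.ne' hN.ne',
      Real.log_mul (by positivity) hN.ne', Real.log_div (by positivity) hN.ne',
      Real.log_mul (by positivity) hT.ne']
    ring
  have : ∫ z, planeEval z (diskPoly * V) * Real.log (planeEval z s + ε) ∂bergmanMeasure α
      ≤ ∫ z, planeEval z (diskPoly * V) * Real.log (planeEval z V) ∂bergmanMeasure α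
        + ∫ z, planeEval z r ∂bergmanMeasure α := by
    rw [← integral_add i2 i3]
    refine integral_mono_ae i1 (by exact i2.add i3) ?_
    filter_upwards [ae_mem_ball_bergmanMeasure α] with z hz
    have hg : 0 < 1 - ‖z‖ ^ 2 := by
      rw [mem_ball_zero_iff] at hz
      nlinarith [norm_nonneg z]
    have hsp : 0 < planeEval z s + ε := by linarith [hs z]
    simp only [hr, planeEval_mul, planeEval_add, planeEval_sub, planeEval_C, planeEval_diskPoly,
      planeEval_one, planeEval_pow]
    set g := 1 - ‖z‖ ^ 2
    have hlg : Real.log g ≤ Real.log b + g * b⁻¹ - 1 := by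
      have := Real.log_le_sub_one_of_pos (div_pos hg hb0)
      rw [Real.log_div hg.ne' hb0.ne', div_eq_mul_inv] at this
      linarith
    have hgV : 0 ≤ g * planeEval z V := mul_nonneg hg.le (hV z)
    have h := mul_log_le_mul_log_add hgV (mul_pos hθ0 hsp)
    rw [Real.log_mul hθ0.ne' hsp.ne'] at h
    have h4 : g * planeEval z V * Real.log (g * planeEval z V)
        = g * planeEval z V * Real.log g + g * planeEval z V * Real.log (planeEval z V) := by
      by_cases h0 : planeEval z V = 0
      · simp [h0]
      · rw [Real.log_mul hg.ne' h0]; ring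
    have h5 := mul_le_mul_of_nonneg_left hlg hgV
    rw [h4] at h
    linarith
  rw [e3] at this
  linarith

lemma totalDegree_jacobiOp_le {α : ℝ} {u : MvPolynomial (Fin 2) ℝ} {d : ℕ}
    (hu : u.totalDegree ≤ d) : (jacobiOp α u).totalDegree ≤ d := by
  have hdisk : diskPoly.totalDegree ≤ 2 := by
    unfold diskPoly
    refine (MvPolynomial.totalDegree_sub _ _).trans (max_le
      ((MvPolynomial.totalDegree_sub _ _).trans (max_le ?_ ?_)) ?_)
    · simp
    · exact (MvPolynomial.totalDegree_X_pow _ _).le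
    · exact (MvPolynomial.totalDegree_X_pow _ _).le
  have hsecond : ∀ j : Fin 2,
      (diskPoly * MvPolynomial.pderiv j (MvPolynomial.pderiv j u)).totalDegree ≤ d := by
    intro j
    by_cases h0 : (MvPolynomial.pderiv j u).totalDegree = 0
    · rw [MvPolynomial.pderiv_eq_zero_of_totalDegree_eq_zero j h0]; simp
    · have h1 := MvPolynomial.totalDegree_pderiv_le j u
      have h2 := MvPolynomial.totalDegree_pderiv_le j (MvPolynomial.pderiv j u)
      have h3 := MvPolynomial.totalDegree_mul diskPoly
        (MvPolynomial.pderiv j (MvPolynomial.pderiv j u))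
      omega
  have hfirst : ∀ j : Fin 2, (MvPolynomial.X j * MvPolynomial.pderiv j u).totalDegree ≤ d := by
    intro j
    by_cases h0 : u.totalDegree = 0
    · rw [MvPolynomial.pderiv_eq_zero_of_totalDegree_eq_zero j h0]; simp
    · have h1 := MvPolynomial.totalDegree_pderiv_le j u
      have h3 := MvPolynomial.totalDegree_mul (MvPolynomial.X j) (MvPolynomial.pderiv j u)
      rw [MvPolynomial.totalDegree_X] at h3
      omega
  have hC : (2 * (MvPolynomial.C α - 1) : MvPolynomial (Fin 2) ℝ)
      = MvPolynomial.C (2 * (α - 1)) := by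
    simp only [map_mul, map_sub, map_one, map_ofNat]
  unfold jacobiOp planeLaplacian
  rw [hC, mul_add diskPoly, ← MvPolynomial.smul_eq_C_mul]
  refine (MvPolynomial.totalDegree_sub _ _).trans (max_le
    ((MvPolynomial.totalDegree_add _ _).trans (max_le (hsecond 0) (hsecond 1)))
    ((MvPolynomial.totalDegree_smul_le _ _).trans
      ((MvPolynomial.totalDegree_add _ _).trans (max_le (hfirst 0) (hfirst 1)))))

end

lemma planeEval_eq_of_pderiv_eq_zero {p : MvPolynomial (Fin 2) ℝ}
    (h : ∀ z j, planeEval z (MvPolynomial.pderiv j p) = 0) (z : ℂ) :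
    planeEval z p = planeEval 0 p := by
  have hre : ∀ w (t : ℝ), HasDerivAt (fun t : ℝ => planeEval (w + t) p) 0 t := by
    intro w t
    have := hasDerivAt_planeEval_re p (w + t)
    rw [h] at this
    have h2 : HasDerivAt (fun s : ℝ => s - t) 1 t := (hasDerivAt_id t).sub_const t
    have h3 : HasDerivAt (fun s : ℝ => planeEval (w + t + s) p) 0 (t - t) := by simpa using this
    simpa [Function.comp_def] using HasDerivAt.comp (h := fun s : ℝ => s - t) t h3 h2
  have him : ∀ w (t : ℝ), HasDerivAt (fun t : ℝ => planeEval (w + t * Complex.I) p) 0 t := by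
    intro w t
    have := hasDerivAt_planeEval_im p (w + t * Complex.I)
    rw [h] at this
    have h2 : HasDerivAt (fun s : ℝ => s - t) 1 t := (hasDerivAt_id t).sub_const t
    have h3 : HasDerivAt (fun s : ℝ => planeEval (w + t * Complex.I + s * Complex.I) p) 0
      (t - t) := by simpa using this
    have h4 := HasDerivAt.comp (h := fun s : ℝ => s - t) t h3 h2
    simp only [Function.comp_def, zero_mul, Complex.ofReal_sub] at h4
    refine h4.congr_of_eventuallyEq (Filter.Eventually.of_forall fun s => ?_)
    dsimp only
    congr 1
    ring
  have e1 := is_const_of_deriv_eq_zero (fun t => (hre 0 t).differentiableAt)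
    (fun t => (hre 0 t).deriv) z.re 0
  have e2 := is_const_of_deriv_eq_zero (fun t => (him z.re t).differentiableAt)
    (fun t => (him z.re t).deriv) z.im 0
  simp only [Complex.re_add_im, zero_add, Complex.ofReal_zero, zero_mul, add_zero] at e1 e2
  rw [e2, e1]

section

variable {ι : Type} [Fintype ι]

lemma lsiDeficit_eq_zero_of_vecGradSq_eq_zero {α : ℝ} (hα : 1 < α)
    {U : ι → MvPolynomial (Fin 2) ℝ} (h : vecGradSq U = 0) : lsiDeficit hα U = 0 := by
  have hprob := isProbabilityMeasure_bergmanMeasure hα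
  have hU : ∀ z i, planeEval z (U i) = planeEval 0 (U i) := by
    intro z i
    refine planeEval_eq_of_pderiv_eq_zero (fun w j => ?_) z
    have h1 := planeEval_vecGradSq w U
    rw [h, planeEval_zero] at h1
    have h2 := (Finset.sum_eq_zero_iff_of_nonneg (fun i _ => by positivity)).1 h1.symm i
      (Finset.mem_univ i)
    fin_cases j
    · exact pow_eq_zero_iff (two_ne_zero) |>.1 (by
        have := sq_nonneg (planeEval w (MvPolynomial.pderiv 1 (U i)))
        have := sq_nonneg (planeEval w (MvPolynomial.pderiv 0 (U i)))
        dsimp only [Fin.zero_eta]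
        linarith)
    · exact pow_eq_zero_iff (two_ne_zero) |>.1 (by
        have := sq_nonneg (planeEval w (MvPolynomial.pderiv 1 (U i)))
        have := sq_nonneg (planeEval w (MvPolynomial.pderiv 0 (U i)))
        dsimp only [Fin.mk_one]
        linarith)
  unfold lsiDeficit entropy
  simp only [h, planeEval_vecNormSq, hU, mul_zero, map_zero, integral_const, smul_eq_mul,
    probReal_univ, one_mul, sub_self]

lemma le_of_first_order {A N κ m₀ : ℝ} (hN : 0 < N) (hκ : 0 < κ)
    (h : ∀ η > 0, ∃ ε, 0 < ε ∧ ε < η ∧ A ≤ N * Real.log (κ + ε) + m₀ * N + η) :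
    A ≤ N * Real.log κ + m₀ * N := by
  refine le_of_forall_pos_le_add fun δ hδ => ?_
  obtain ⟨ε, h0, h1, h2⟩ := h (δ / (1 + N / κ)) (by positivity)
  have h3 : Real.log (κ + ε) ≤ Real.log κ + ε / κ := by
    have := Real.log_le_sub_one_of_pos (x := (κ + ε) / κ) (by positivity)
    rw [Real.log_div (by positivity) hκ.ne', add_div, div_self hκ.ne'] at this
    linarith
  have h4 : N * Real.log (κ + ε) ≤ N * Real.log κ + N / κ * ε := by
    have := mul_le_mul_of_nonneg_left h3 hN.le
    calc _ ≤ _ := this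
      _ = _ := by ring
  have h5 : N / κ * ε ≤ N / κ * (δ / (1 + N / κ)) :=
    mul_le_mul_of_nonneg_left h1.le (by positivity)
  have h6 : N / κ * (δ / (1 + N / κ)) + δ / (1 + N / κ) = δ := by
    field_simp
    ring
  linarith

lemma sq_planeIntegral_vecInner_le {α : ℝ} (hα : 1 < α) (U H : ι → MvPolynomial (Fin 2) ℝ) :
    planeIntegral hα (diskPoly ^ 2 * vecInner U H) ^ 2
      ≤ planeIntegral hα (diskPoly ^ 2 * vecNormSq U)
        * planeIntegral hα (diskPoly ^ 2 * vecNormSq H) := by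
  have h : ∀ t : ℝ, 0 ≤ planeIntegral hα (diskPoly ^ 2 * vecNormSq H) * (t * t)
      + 2 * planeIntegral hα (diskPoly ^ 2 * vecInner U H) * t
      + planeIntegral hα (diskPoly ^ 2 * vecNormSq U) := by
    intro t
    have : 0 ≤ planeIntegral hα (diskPoly ^ 2 * vecNormSq (U + t • H)) :=
      planeIntegral_nonneg hα fun z _ => by
        rw [planeEval_mul, planeEval_pow]
        exact mul_nonneg (sq_nonneg _) (planeEval_vecNormSq_nonneg z _)
    rw [vecNormSq_add_smul, mul_add, mul_add, map_add, map_add, mul_smul_comm, mul_smul_comm,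
      map_smul, map_smul, smul_eq_mul, smul_eq_mul] at this
    linarith
  have := discrim_le_zero h
  unfold discrim at this
  linarith

lemma planeLaplacian_vecNormSq (U : ι → MvPolynomial (Fin 2) ℝ) :
    planeLaplacian (vecNormSq U)
      = 2 * (vecGradSq U + vecInner U fun i => planeLaplacian (U i)) := by
  unfold planeLaplacian
  rw [pderiv_vecNormSq, pderiv_vecNormSq, Derivation.leibniz, Derivation.leibniz,
    MvPolynomial.pderiv_two, MvPolynomial.pderiv_two, pderiv_vecInner, pderiv_vecInner]
  simp only [vecInner, vecGradSq, planeGrad, smul_eq_mul, mul_zero, add_zero, mul_add,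
    Finset.sum_add_distrib]
  ring

lemma sum_planeIntegral_bochner {α : ℝ} (hα : 1 < α) (U : ι → MvPolynomial (Fin 2) ℝ) :
    α * planeIntegral hα (vecNormSq fun i => jacobiOp α (U i))
      = α * (2 * (α - 1)) * planeIntegral hα (diskPoly * vecGradSq U)
        + (α - 1) * planeIntegral hα (diskPoly ^ 2 * ∑ i, planeHess (U i))
        + planeIntegral hα (diskPoly ^ 2 * vecNormSq fun i => planeLaplacian (U i)) := by
  simp only [vecNormSq, vecGradSq, Finset.mul_sum, map_sum, ← Finset.sum_add_distrib]
  exact Finset.sum_congr rfl fun i _ => planeIntegral_bochner hα (U i)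

lemma diskPoly_ne_zero : diskPoly ≠ 0 := by
  intro h
  have := planeEval_diskPoly 0
  rw [h] at this
  simp at this

lemma planeIntegral_diskPoly_pow_mul_pos {α : ℝ} (hα : 1 < α) {p : MvPolynomial (Fin 2) ℝ}
    (hp : ∀ z, 0 ≤ planeEval z p) (h0 : p ≠ 0) (k : ℕ) :
    0 < planeIntegral hα (diskPoly ^ k * p) := by
  have hpos : ∀ z ∈ ball (0:ℂ) 1, 0 ≤ planeEval z (diskPoly ^ k * p) := fun z hz => by
    rw [planeEval_mul, planeEval_pow, planeEval_diskPoly]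
    exact mul_nonneg (pow_nonneg (one_sub_norm_sq_nonneg hz) k) (hp z)
  refine lt_of_le_of_ne (planeIntegral_nonneg hα hpos) fun h => ?_
  exact mul_ne_zero (pow_ne_zero k diskPoly_ne_zero) h0 (planeIntegral_eq_zero hα hpos h.symm)

end

/-- The logarithmic Sobolev inequality for vector-valued real polynomials on the disk. -/
theorem lsiDeficit_nonneg_of_totalDegree_le (d : ℕ) : ∀ {α : ℝ} (hα : 1 < α) {ι : Type}
    [Fintype ι] (U : ι → MvPolynomial (Fin 2) ℝ), (∀ i, (U i).totalDegree ≤ d) →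
    0 ≤ lsiDeficit hα U := by
  induction d with
  | zero =>
    intro α hα ι _ U hU
    refine (lsiDeficit_eq_zero_of_vecGradSq_eq_zero hα ?_).ge
    unfold vecGradSq planeGrad
    refine Finset.sum_eq_zero fun i _ => ?_
    have h := Nat.le_zero.1 (hU i)
    simp [MvPolynomial.pderiv_eq_zero_of_totalDegree_eq_zero _ h]
  | succ d ih =>
    intro α hα ι _ W hW
    by_contra hneg
    rw [not_le] at hneg
    obtain ⟨m₀, hm₀, U, hU, hM, hδ, hmin⟩ := exists_min_lsiDeficit hα (d + 1) hW hneg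
    have hα0 : 0 < α := by linarith
    have hα1 : 0 < α - 1 := by linarith
    have hα' : 1 < α + 1 := by linarith
    have hV0 : vecGradSq U ≠ 0 := fun h => by
      rw [lsiDeficit_eq_zero_of_vecGradSq_eq_zero hα h] at hδ
      exact hm₀.ne hδ.symm
    have hs0 : vecNormSq U ≠ 0 := fun h => by
      rw [h, map_zero] at hM
      exact zero_ne_one hM
    have hV := fun z => planeEval_vecGradSq_nonneg z U
    have hs := fun z => planeEval_vecNormSq_nonneg z U
    have hN : 0 < planeIntegral hα (diskPoly * vecGradSq U) := by
      simpa using planeIntegral_diskPoly_pow_mul_pos hα hV hV0 1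
    have hT := planeIntegral_diskPoly_pow_mul_pos hα hV hV0 2
    have hK : 0 < planeIntegral hα (diskPoly * vecNormSq U) := by
      simpa using planeIntegral_diskPoly_pow_mul_pos hα hs hs0 1
    have hS : 0 ≤ planeIntegral hα (diskPoly ^ 2 * vecNormSq fun i => planeLaplacian (U i)) :=
      planeIntegral_nonneg hα fun z _ => by
        rw [planeEval_mul, planeEval_pow]
        exact mul_nonneg (sq_nonneg _) (planeEval_vecNormSq_nonneg z _)
    have hk : planeIntegral hα (diskPoly ^ 2 * vecNormSq U)
        ≤ planeIntegral hα (diskPoly * vecNormSq U) := by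
      refine planeIntegral_mono hα fun z hz => ?_
      rw [planeEval_mul, planeEval_mul, planeEval_pow, planeEval_diskPoly]
      refine mul_le_mul_of_nonneg_right ?_ (hs z)
      have := one_sub_norm_sq_nonneg hz
      nlinarith [sq_nonneg ‖z‖]
    have hCS := sq_planeIntegral_vecInner_le hα U fun i => planeLaplacian (U i)
    have hrel := planeIntegral_diskPoly_sq_laplacian hα (vecNormSq U)
    have h2 : diskPoly ^ 2 * planeLaplacian (vecNormSq U)
        = (2 : ℝ) • (diskPoly ^ 2 * vecGradSq U
          + diskPoly ^ 2 * vecInner U fun i => planeLaplacian (U i)) := by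
      rw [planeLaplacian_vecNormSq, ofNat_smul_eq_nsmul ℝ 2, two_nsmul]
      ring
    rw [h2, map_smul, map_add, smul_eq_mul, hM, mul_one] at hrel
    have hB := sum_planeIntegral_bochner hα U
    have hE := entropy_gradient_le hα hα' U (ih hα' (vecGradient U) (by
      rintro (i | i)
      · exact (MvPolynomial.totalDegree_pderiv_le 0 (U i)).trans (by have := hU i; omega)
      · exact (MvPolynomial.totalDegree_pderiv_le 1 (U i)).trans (by have := hU i; omega)))
    have hF := fun η hη => first_order_of_isMin hα hM hδ (η := η) (fun t => hmin _ fun i =>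
      (MvPolynomial.totalDegree_add _ _).trans (max_le (hU i)
        ((MvPolynomial.totalDegree_smul_le _ _).trans (totalDegree_jacobiOp_le (hU i))))) hη
    have hG1 := fun ε hε => gibbs_weighted hα hV hs hN (ε := ε) hε
    have hG2 := fun ε hε => gibbs_unweighted hα hV hs hM hN hT (ε := ε) hε
    generalize planeIntegral hα (vecNormSq fun i => jacobiOp α (U i)) = LL at hB hF
    generalize planeIntegral hα (diskPoly * vecGradSq U) = N at *
    generalize planeIntegral hα (diskPoly ^ 2 * vecGradSq U) = T at *
    generalize planeIntegral hα (diskPoly * vecNormSq U) = K at *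
    generalize planeIntegral hα (diskPoly ^ 2 * vecNormSq U) = k at *
    generalize planeIntegral hα (diskPoly ^ 2 * vecInner U fun i => planeLaplacian (U i)) = P at *
    generalize planeIntegral hα (diskPoly ^ 2 * vecNormSq fun i => planeLaplacian (U i)) = S at *
    generalize planeIntegral hα (diskPoly ^ 2 * ∑ i, planeHess (U i)) = Hs at *
    have hB' : 1 / (α - 1) * LL = 2 * N + 1 / α * Hs + S / (α * (α - 1)) := by
      field_simp
      linarith
    refine log_bounds_absurd (m₀ := m₀) hα hN hT hS hK hk hCS hrel hm₀ ?_ ?_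
    · refine le_of_first_order hN (by positivity) fun η hη => ?_
      obtain ⟨ε, h0, h1, h2⟩ := hF η hη
      have h3 := hG1 ε h0
      exact ⟨ε, h0, h1, by linarith⟩
    · have hpos : 0 < α / (α - 1) * T / N := by positivity
      have hone : S / (α * (α - 1)) - N * Real.log (α / (α - 1) * T / N)
          ≤ N * Real.log 1 + m₀ * N := by
        refine le_of_first_order hN one_pos fun η hη => ?_
        obtain ⟨ε, h0, h1, h2⟩ := hF η hη
        have h3 := hG2 ε h0
        exact ⟨ε, h0, h1, by linarith⟩
      rw [Real.log_one] at hone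
      linarith

/-- The logarithmic Sobolev inequality for real polynomials on the disk. -/
theorem entropy_planeEval_sq_le {α : ℝ} (hα : 1 < α) (u : MvPolynomial (Fin 2) ℝ) :
    entropy (bergmanMeasure α) (fun z => planeEval z u ^ 2)
      ≤ 1 / (α - 1) * planeIntegral hα (diskPoly * planeGrad u u) := by
  have h := lsiDeficit_nonneg_of_totalDegree_le u.totalDegree hα (fun _ : Unit => u)
    fun _ => le_rfl
  simpa [lsiDeficit, vecGradSq, vecNormSq] using h

lemma Polynomial.exists_derivative_eq (p : Polynomial ℝ) :
    ∃ q : Polynomial ℝ, Polynomial.derivative q = p := by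
  induction p using Polynomial.induction_on' with
  | add p q hp hq =>
    obtain ⟨P, rfl⟩ := hp
    obtain ⟨Q, rfl⟩ := hq
    exact ⟨P + Q, by simp⟩
  | monomial n a =>
    refine ⟨Polynomial.monomial (n + 1) (a / (n + 1)), ?_⟩
    rw [Polynomial.derivative_monomial]
    have : (n : ℝ) + 1 ≠ 0 := by positivity
    simp [this]

lemma Polynomial.exists_near_with_derivative {ψ ψ' : ℝ → ℝ} {K : ℝ} (hK : 0 ≤ K)
    (hψ : ∀ t ∈ Set.Icc 0 K, HasDerivAt ψ (ψ' t) t) (hψ' : ContinuousOn ψ' (Set.Icc 0 K))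
    {η : ℝ} (hη : 0 < η) :
    ∃ R : Polynomial ℝ, ∀ t ∈ Set.Icc 0 K, |R.eval t - ψ t| ≤ η * K ∧
      |R.derivative.eval t - ψ' t| ≤ η := by
  obtain ⟨p, hp⟩ := exists_polynomial_near_of_continuousOn 0 K ψ' hψ' η hη
  obtain ⟨q, rfl⟩ := p.exists_derivative_eq
  refine ⟨q + Polynomial.C (ψ 0 - q.eval 0), fun t ht => ⟨?_, ?_⟩⟩
  · have h := Convex.norm_image_sub_le_of_norm_hasDerivWithin_le
      (f := fun t => q.eval t - ψ t) (f' := fun t => q.derivative.eval t - ψ' t) (C := η)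
      (s := Set.Icc 0 K) (x := 0) (y := t)
      (fun x hx => ((q.hasDerivAt x).sub (hψ x hx)).hasDerivWithinAt)
      (fun x hx => (hp x hx).le) (convex_Icc 0 K) ⟨le_rfl, hK⟩ ht
    rw [Real.norm_eq_abs, sub_zero, Real.norm_eq_abs, abs_of_nonneg ht.1] at h
    have e : (q + Polynomial.C (ψ 0 - q.eval 0)).eval t - ψ t
        = q.eval t - ψ t - (q.eval 0 - ψ 0) := by simp; ring
    rw [e]
    exact h.trans (mul_le_mul_of_nonneg_left ht.2 hη.le)
  · simpa using (hp t ht).le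

lemma tendsto_integral_bergmanMeasure {α : ℝ} (hα : 1 < α) {F : ℕ → ℂ → ℝ} {G : ℂ → ℝ} {C : ℝ}
    (hF : ∀ k, Continuous (F k)) (hC : ∀ k, ∀ z ∈ ball (0:ℂ) 1, |F k z| ≤ C)
    (hlim : ∀ z ∈ ball (0:ℂ) 1, Filter.Tendsto (fun k => F k z) Filter.atTop (nhds (G z))) :
    Filter.Tendsto (fun k => ∫ z, F k z ∂bergmanMeasure α) Filter.atTop
      (nhds (∫ z, G z ∂bergmanMeasure α)) := by
  have := isProbabilityMeasure_bergmanMeasure hα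
  refine tendsto_integral_of_dominated_convergence (fun _ => C)
    (fun k => (hF k).aestronglyMeasurable) (integrable_const C) (fun k => ?_) ?_
  · filter_upwards [ae_mem_ball_bergmanMeasure α] with z hz using hC k z hz
  · filter_upwards [ae_mem_ball_bergmanMeasure α] with z hz using hlim z hz

lemma exists_bound_planeEval (p : MvPolynomial (Fin 2) ℝ) :
    ∃ K, 0 ≤ K ∧ ∀ z ∈ ball (0:ℂ) 1, |planeEval z p| ≤ K := by
  obtain ⟨K, hK⟩ := (isCompact_closedBall (0:ℂ) 1).exists_bound_of_continuousOn
    (continuous_planeEval p).continuousOn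
  refine ⟨K, (abs_nonneg _).trans (hK 0 (by simp)), fun z hz => hK z (ball_subset_closedBall hz)⟩

lemma planeEval_aeval (z : ℂ) (R : Polynomial ℝ) (p : MvPolynomial (Fin 2) ℝ) :
    planeEval z (Polynomial.aeval p R) = R.eval (planeEval z p) := by
  induction R using Polynomial.induction_on' with
  | add p q hp hq => simp [hp, hq]
  | monomial n a =>
    simp [Polynomial.aeval_monomial, MvPolynomial.algebraMap_eq]

lemma planeGrad_aeval (R : Polynomial ℝ) (p : MvPolynomial (Fin 2) ℝ) :
    planeGrad (Polynomial.aeval p R) (Polynomial.aeval p R)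
      = Polynomial.aeval p R.derivative ^ 2 * planeGrad p p := by
  unfold planeGrad
  rw [Derivation.map_aeval, Derivation.map_aeval]
  simp only [smul_eq_mul]
  ring

/-- The logarithmic Sobolev inequality for `C¹` functions of a nonnegative polynomial. -/
lemma entropy_comp_sq_le {α : ℝ} (hα : 1 < α) {p : MvPolynomial (Fin 2) ℝ}
    (hp : ∀ z, 0 ≤ planeEval z p) {ψ ψ' : ℝ → ℝ}
    (hψ : ∀ t, 0 ≤ t → HasDerivAt ψ (ψ' t) t) (hψ' : ContinuousOn ψ' (Set.Ici 0)) :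
    entropy (bergmanMeasure α) (fun z => ψ (planeEval z p) ^ 2)
      ≤ 1 / (α - 1) * ∫ z, (1 - ‖z‖ ^ 2) * (ψ' (planeEval z p) ^ 2 * planeEval z (planeGrad p p))
        ∂bergmanMeasure α := by
  obtain ⟨K, hK0, hK⟩ := exists_bound_planeEval p
  obtain ⟨G, hG0, hG⟩ := exists_bound_planeEval (planeGrad p p)
  have hmem : ∀ z ∈ ball (0:ℂ) 1, planeEval z p ∈ Set.Icc 0 K := fun z hz =>
    ⟨hp z, (abs_le.1 (hK z hz)).2⟩
  have hψc : ContinuousOn ψ (Set.Icc 0 K) := fun t ht =>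
    (hψ t ht.1).continuousAt.continuousWithinAt
  have hψc' : ContinuousOn ψ' (Set.Icc 0 K) := hψ'.mono Set.Icc_subset_Ici_self
  obtain ⟨B, hB⟩ := isCompact_Icc.exists_bound_of_continuousOn hψc
  obtain ⟨B', hB'⟩ := isCompact_Icc.exists_bound_of_continuousOn hψc'
  choose R hR using fun k : ℕ => Polynomial.exists_near_with_derivative hK0
    (fun t ht => hψ t ht.1) hψc' (η := 1 / ((k : ℝ) + 1)) (by positivity)
  have hη : ∀ k : ℕ, 1 / ((k : ℝ) + 1) ≤ 1 := fun k => by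
    rw [div_le_one (by positivity)]; linarith [(Nat.cast_nonneg k : (0:ℝ) ≤ k)]
  have hη0 := tendsto_one_div_add_atTop_nhds_zero_nat (𝕜 := ℝ)
  have bR : ∀ k, ∀ t ∈ Set.Icc 0 K, |(R k).eval t| ≤ B + K := fun k t ht => by
    have h1 := (hR k t ht).1
    have h2 := hB t ht
    have h3 := mul_le_mul_of_nonneg_right (hη k) hK0
    rw [Real.norm_eq_abs] at h2
    have := abs_sub_abs_le_abs_sub ((R k).eval t) (ψ t)
    linarith
  have bR' : ∀ k, ∀ t ∈ Set.Icc 0 K, |(R k).derivative.eval t| ≤ B' + 1 := fun k t ht => by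
    have h1 := (hR k t ht).2
    have h2 := hB' t ht
    rw [Real.norm_eq_abs] at h2
    have := abs_sub_abs_le_abs_sub ((R k).derivative.eval t) (ψ' t)
    linarith [hη k]
  have lR : ∀ t ∈ Set.Icc 0 K, Filter.Tendsto (fun k => (R k).eval t) Filter.atTop
      (nhds (ψ t)) := fun t ht => by
    rw [tendsto_iff_norm_sub_tendsto_zero]
    refine squeeze_zero (fun _ => norm_nonneg _) (fun k => (hR k t ht).1) ?_
    simpa using hη0.mul_const K
  have lR' : ∀ t ∈ Set.Icc 0 K, Filter.Tendsto (fun k => (R k).derivative.eval t) Filter.atTop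
      (nhds (ψ' t)) := fun t ht => by
    rw [tendsto_iff_norm_sub_tendsto_zero]
    exact squeeze_zero (fun _ => norm_nonneg _) (fun k => (hR k t ht).2) hη0
  have hcR : ∀ (q : Polynomial ℝ), Continuous fun z => q.eval (planeEval z p) := fun q =>
    q.continuous.comp (continuous_planeEval p)
  have bsq : ∀ k, ∀ z ∈ ball (0:ℂ) 1, (R k).eval (planeEval z p) ^ 2 ≤ (B + K) ^ 2 :=
    fun k z hz => sq_le_sq.2 ((bR k _ (hmem z hz)).trans (le_abs_self _))
  obtain ⟨D, hD⟩ := (isCompact_Icc (a := (0:ℝ)) (b := (B + K) ^ 2)).exists_bound_of_continuousOn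
    Real.continuous_mul_log.continuousOn
  have l1 := tendsto_integral_bergmanMeasure hα
    (F := fun k z => (R k).eval (planeEval z p) ^ 2) (C := (B + K) ^ 2)
    (fun k => (hcR (R k)).pow 2)
    (fun k z hz => by rw [abs_of_nonneg (sq_nonneg _)]; exact bsq k z hz)
    (fun z hz => (lR _ (hmem z hz)).pow 2)
  have l2 := tendsto_integral_bergmanMeasure hα
    (F := fun k z => (R k).eval (planeEval z p) ^ 2
      * Real.log ((R k).eval (planeEval z p) ^ 2)) (C := D)
    (fun k => Real.continuous_mul_log.comp ((hcR (R k)).pow 2))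
    (fun k z hz => hD _ ⟨sq_nonneg _, bsq k z hz⟩)
    (fun z hz => (Real.continuous_mul_log.tendsto _).comp ((lR _ (hmem z hz)).pow 2))
  have l3 := tendsto_integral_bergmanMeasure hα
    (F := fun k z => (1 - ‖z‖ ^ 2) * ((R k).derivative.eval (planeEval z p) ^ 2
      * planeEval z (planeGrad p p))) (C := 1 * ((B' + 1) ^ 2 * G))
    (fun k => by have := hcR (R k).derivative; fun_prop)
    (fun k z hz => by
      rw [abs_mul, abs_mul]
      have hg := one_sub_norm_sq_nonneg hz
      refine mul_le_mul ?_ (mul_le_mul ?_ (hG z hz) (abs_nonneg _) (sq_nonneg _)) (by positivity)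
        zero_le_one
      · rw [abs_of_nonneg hg]; linarith [sq_nonneg ‖z‖]
      · rw [abs_of_nonneg (sq_nonneg _)]
        exact sq_le_sq.2 ((bR' k _ (hmem z hz)).trans (le_abs_self _)))
    (fun z hz => (((lR' _ (hmem z hz)).pow 2).mul_const _).const_mul _)
  refine le_of_tendsto_of_tendsto' (l2.sub ((Real.continuous_mul_log.tendsto _).comp l1))
    (l3.const_mul (1 / (α - 1))) fun k => ?_
  have h := entropy_planeEval_sq_le hα (Polynomial.aeval p (R k))
  rw [planeIntegral_apply, planeGrad_aeval] at h
  simpa only [entropy, Function.comp_apply, planeEval_mul, planeEval_pow, planeEval_diskPoly, planeEval_aeval] using h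

lemma entropy_rpow_le {α : ℝ} (hα : 1 < α) {p : MvPolynomial (Fin 2) ℝ}
    (hp : ∀ z, 0 ≤ planeEval z p) {ε : ℝ} (hε : 0 < ε) (γ : ℝ) :
    entropy (bergmanMeasure α) (fun z => (planeEval z p + ε) ^ (2 * γ))
      ≤ γ ^ 2 / (α - 1) * ∫ z, (1 - ‖z‖ ^ 2) * ((planeEval z p + ε) ^ (2 * γ - 2)
        * planeEval z (planeGrad p p)) ∂bergmanMeasure α := by
  have h := entropy_comp_sq_le hα hp (ψ := fun t => (t + ε) ^ γ)
    (ψ' := fun t => γ * (t + ε) ^ (γ - 1))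
    (fun t ht => by
      simpa using ((hasDerivAt_id t).add_const ε).rpow_const (p := γ)
        (Or.inl (by simp only [id]; positivity)))
    (ContinuousOn.mul continuousOn_const (ContinuousOn.rpow_const (by fun_prop)
      fun t ht => Or.inl (by have : (0:ℝ) ≤ t := ht; positivity)))
  have e1 : ∀ z, ((planeEval z p + ε) ^ γ) ^ 2 = (planeEval z p + ε) ^ (2 * γ) := fun z => by
    rw [mul_comm, Real.rpow_mul (by linarith [hp z]), Real.rpow_two]
  have e2 : ∀ z, (γ * (planeEval z p + ε) ^ (γ - 1)) ^ 2
      = γ ^ 2 * (planeEval z p + ε) ^ (2 * γ - 2) := fun z => by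
    rw [mul_pow, show 2 * γ - 2 = (γ - 1) * 2 by ring, Real.rpow_mul (by linarith [hp z]),
      Real.rpow_two]
  simp only [e1, e2] at h
  refine h.trans_eq ?_
  rw [show γ ^ 2 / (α - 1) = 1 / (α - 1) * γ ^ 2 by ring, mul_assoc,
    ← integral_const_mul (γ ^ 2)]
  congr 2
  ext z
  ring

lemma integral_by_parts_rpow {α : ℝ} (hα : 1 < α) {p : MvPolynomial (Fin 2) ℝ}
    (hp : ∀ z, 0 ≤ planeEval z p) {ε : ℝ} (hε : 0 < ε) (β : ℝ) :
    ∫ z, (1 - ‖z‖ ^ 2) * (β * (planeEval z p + ε) ^ (β - 1) * planeEval z (planeGrad p p)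
        + (planeEval z p + ε) ^ β * planeEval z (planeLaplacian p)) ∂bergmanMeasure α
      = 2 * (α - 1) * ∫ z, (planeEval z p + ε) ^ β *
        (z.re * planeEval z (MvPolynomial.pderiv 0 p)
          + z.im * planeEval z (MvPolynomial.pderiv 1 p)) ∂bergmanMeasure α := by
  have hpos : ∀ z, planeEval z p + ε ≠ 0 := fun z => by linarith [hp z]
  have hc : ∀ b : ℝ, Continuous fun z => (planeEval z p + ε) ^ b := fun b =>
    Continuous.rpow_const (by fun_prop) fun z => Or.inl (hpos z)
  have hcb := hc β
  have hcb1 := hc (β - 1)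
  have h0 := integral_by_parts_re hα
    (F := fun z => (planeEval z p + ε) ^ β * planeEval z (MvPolynomial.pderiv 0 p))
    (F' := fun z => β * (planeEval z p + ε) ^ (β - 1) * planeEval z (MvPolynomial.pderiv 0 p) ^ 2
      + (planeEval z p + ε) ^ β * planeEval z (MvPolynomial.pderiv 0 (MvPolynomial.pderiv 0 p)))
    (by fun_prop) (by fun_prop) fun z => by
      have h1 := ((hasDerivAt_planeEval_re p z).add_const ε).rpow_const (p := β)
        (Or.inl (by simpa using hpos z))
      refine (h1.mul (hasDerivAt_planeEval_re (MvPolynomial.pderiv 0 p) z)).congr_deriv ?_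
      simp only [Complex.ofReal_zero, add_zero]
      ring
  have h1 := integral_by_parts_im hα
    (F := fun z => (planeEval z p + ε) ^ β * planeEval z (MvPolynomial.pderiv 1 p))
    (F' := fun z => β * (planeEval z p + ε) ^ (β - 1) * planeEval z (MvPolynomial.pderiv 1 p) ^ 2
      + (planeEval z p + ε) ^ β * planeEval z (MvPolynomial.pderiv 1 (MvPolynomial.pderiv 1 p)))
    (by fun_prop) (by fun_prop) fun z => by
      have h1 := ((hasDerivAt_planeEval_im p z).add_const ε).rpow_const (p := β)
        (Or.inl (by simpa using hpos z))
      refine (h1.mul (hasDerivAt_planeEval_im (MvPolynomial.pderiv 1 p) z)).congr_deriv ?_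
      simp only [Complex.ofReal_zero, zero_mul, add_zero]
      ring
  have h2 := congrArg₂ (· + ·) h0 h1
  rw [← integral_add (Continuous.integrable_bergmanMeasure hα (by fun_prop))
    (Continuous.integrable_bergmanMeasure hα (by fun_prop)), add_zero] at h2
  rw [← sub_eq_zero, ← integral_const_mul, ← integral_sub
    (Continuous.integrable_bergmanMeasure hα (by fun_prop))
    (Continuous.integrable_bergmanMeasure hα (by fun_prop)), ← h2]
  congr 1
  ext z
  simp only [planeGrad, planeLaplacian, planeEval_add, planeEval_mul]
  ring

lemma exists_planeEval_eq_re_im (f : Polynomial ℂ) : ∃ a b : MvPolynomial (Fin 2) ℝ,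
    ∀ z, planeEval z a = (f.eval z).re ∧ planeEval z b = (f.eval z).im := by
  induction f using Polynomial.induction_on with
  | C c => exact ⟨MvPolynomial.C c.re, MvPolynomial.C c.im, fun z => by simp⟩
  | add p q hp hq =>
    obtain ⟨a, b, h⟩ := hp
    obtain ⟨a', b', h'⟩ := hq
    exact ⟨a + a', b + b', fun z => by simp [h, h']⟩
  | monomial n c h =>
    obtain ⟨a, b, h⟩ := h
    refine ⟨a * MvPolynomial.X 0 - b * MvPolynomial.X 1,
      a * MvPolynomial.X 1 + b * MvPolynomial.X 0, fun z => ?_⟩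
    rw [pow_succ, ← mul_assoc, Polynomial.eval_mul, Polynomial.eval_X, Complex.mul_re,
      Complex.mul_im, ← (h z).1, ← (h z).2]
    simp

lemma hasDerivAt_polynomial_line (f : Polynomial ℂ) (z c : ℂ) :
    HasDerivAt (fun t : ℝ => f.eval (z + t * c)) (f.derivative.eval z * c) 0 := by
  have h1 : HasDerivAt (fun t : ℝ => z + t * c) c 0 := by
    simpa using ((Complex.ofRealCLM.hasDerivAt (x := 0)).mul_const c).const_add z
  have h2 : HasDerivAt (fun w => f.eval w) (f.derivative.eval z) (z + (0:ℝ) * c) := by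
    simpa using f.hasDerivAt z
  exact h2.comp (0:ℝ) h1

lemma planeEval_pderiv_of_eq_re {f : Polynomial ℂ} {a : MvPolynomial (Fin 2) ℝ}
    (h : ∀ z, planeEval z a = (f.eval z).re) (z : ℂ) :
    planeEval z (MvPolynomial.pderiv 0 a) = (f.derivative.eval z).re ∧
    planeEval z (MvPolynomial.pderiv 1 a) = -(f.derivative.eval z).im := by
  have h0 := hasDerivAt_planeEval_re a z
  have h1 := hasDerivAt_planeEval_im a z
  simp only [h] at h0 h1
  have g0 := Complex.reCLM.hasFDerivAt.comp_hasDerivAt (0:ℝ) (hasDerivAt_polynomial_line f z 1)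
  have g1 := Complex.reCLM.hasFDerivAt.comp_hasDerivAt (0:ℝ)
    (hasDerivAt_polynomial_line f z Complex.I)
  simp only [Function.comp_def, mul_one, Complex.reCLM_apply, Complex.mul_re, Complex.I_re,
    Complex.I_im, mul_zero, zero_sub] at g0 g1
  exact ⟨h0.unique g0, h1.unique g1⟩

lemma planeEval_pderiv_of_eq_im {f : Polynomial ℂ} {b : MvPolynomial (Fin 2) ℝ}
    (h : ∀ z, planeEval z b = (f.eval z).im) (z : ℂ) :
    planeEval z (MvPolynomial.pderiv 0 b) = (f.derivative.eval z).im ∧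
    planeEval z (MvPolynomial.pderiv 1 b) = (f.derivative.eval z).re := by
  have h0 := hasDerivAt_planeEval_re b z
  have h1 := hasDerivAt_planeEval_im b z
  simp only [h] at h0 h1
  have g0 := Complex.imCLM.hasFDerivAt.comp_hasDerivAt (0:ℝ) (hasDerivAt_polynomial_line f z 1)
  have g1 := Complex.imCLM.hasFDerivAt.comp_hasDerivAt (0:ℝ)
    (hasDerivAt_polynomial_line f z Complex.I)
  simp only [Function.comp_def, mul_one, Complex.imCLM_apply, Complex.mul_im, Complex.I_re,
    Complex.I_im, mul_zero, add_zero] at g0 g1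
  exact ⟨h0.unique g0, h1.unique g1⟩

/-- The squared modulus of a holomorphic polynomial as a real polynomial in the plane. -/
lemma exists_planeEval_eq_norm_sq (f : Polynomial ℂ) : ∃ p : MvPolynomial (Fin 2) ℝ, ∀ z,
    planeEval z p = ‖f.eval z‖ ^ 2 ∧
    planeEval z (planeGrad p p) = 4 * (‖f.eval z‖ ^ 2 * ‖f.derivative.eval z‖ ^ 2) ∧
    planeEval z (planeLaplacian p) = 4 * ‖f.derivative.eval z‖ ^ 2 ∧
    z.re * planeEval z (MvPolynomial.pderiv 0 p) + z.im * planeEval z (MvPolynomial.pderiv 1 p)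
      = 2 * (z * f.derivative.eval z * starRingEnd ℂ (f.eval z)).re := by
  obtain ⟨a, b, h⟩ := exists_planeEval_eq_re_im f
  have ha := planeEval_pderiv_of_eq_re fun z => (h z).1
  have hb := planeEval_pderiv_of_eq_im fun z => (h z).2
  have ha0 := planeEval_pderiv_of_eq_re fun z => (ha z).1
  have hb0 := planeEval_pderiv_of_eq_im fun z => (hb z).1
  have ha1 := planeEval_pderiv_of_eq_im (f := f.derivative)
    (b := -MvPolynomial.pderiv 1 a) fun z => by rw [planeEval_neg, (ha z).2, neg_neg]
  have hb1 := planeEval_pderiv_of_eq_re fun z => (hb z).2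
  have ha1' : ∀ z, planeEval z (MvPolynomial.pderiv 1 (MvPolynomial.pderiv 1 a))
      = -(f.derivative.derivative.eval z).re := fun z => by
    rw [← (ha1 z).2, map_neg, planeEval_neg, neg_neg]
  refine ⟨a ^ 2 + b ^ 2, fun z => ⟨?_, ?_, ?_, ?_⟩⟩
  · rw [Complex.sq_norm, Complex.normSq_apply, planeEval_add, planeEval_pow, planeEval_pow,
      (h z).1, (h z).2]
    ring
  · simp only [planeGrad, Derivation.leibniz_pow, map_add, planeEval_add, planeEval_mul,
      nsmul_eq_mul, smul_eq_mul, (ha z).1, (ha z).2, (hb z).1, (hb z).2, (h z).1, (h z).2,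
      Complex.sq_norm, Complex.normSq_apply, Nat.add_one_sub_one, pow_one, ← map_natCast
        (MvPolynomial.C : ℝ →+* MvPolynomial (Fin 2) ℝ), planeEval_C]
    push_cast
    ring
  · simp only [planeLaplacian, Derivation.leibniz_pow, map_add, planeEval_add, planeEval_mul,
      nsmul_eq_mul, smul_eq_mul, (ha z).1, (ha z).2, (hb z).1, (hb z).2, (h z).1, (h z).2,
      (ha0 z).1, (hb0 z).1, ha1', (hb1 z).2, Derivation.leibniz,
      Complex.sq_norm, Complex.normSq_apply, Nat.add_one_sub_one, pow_one, ← map_natCast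
        (MvPolynomial.C : ℝ →+* MvPolynomial (Fin 2) ℝ), planeEval_C, MvPolynomial.pderiv_C,
      planeEval_zero]
    push_cast
    ring
  · simp only [Derivation.leibniz_pow, map_add, planeEval_add, planeEval_mul,
      nsmul_eq_mul, smul_eq_mul, (ha z).1, (ha z).2, (hb z).1, (hb z).2, (h z).1, (h z).2,
      Nat.add_one_sub_one, pow_one, ← map_natCast
        (MvPolynomial.C : ℝ →+* MvPolynomial (Fin 2) ℝ), planeEval_C, Complex.mul_re,
      Complex.mul_im, Complex.conj_re, Complex.conj_im]
    push_cast
    ring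

/-- The entropy inequality underlying hypercontractivity in one disk variable. -/
lemma entropy_polynomial_le {α : ℝ} (hα : 1 < α) (f : Polynomial ℂ) {ε s : ℝ} (hε : 0 < ε)
    (hs : 0 < s) :
    entropy (bergmanMeasure α) (fun z => (‖f.eval z‖ ^ 2 + ε) ^ (s / 2))
      ≤ ∫ z, s / 2 * ((‖f.eval z‖ ^ 2 + ε) ^ (s / 2 - 1)
        * (z * f.derivative.eval z * starRingEnd ℂ (f.eval z)).re) ∂bergmanMeasure α := by
  obtain ⟨p, hp⟩ := exists_planeEval_eq_norm_sq f
  have hp0 : ∀ z, 0 ≤ planeEval z p := fun z => by rw [(hp z).1]; positivity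
  have h1 := entropy_rpow_le hα hp0 hε (s / 4)
  have h2 := integral_by_parts_rpow hα hp0 hε (s / 2 - 1)
  have hα1 : 0 < α - 1 := by linarith
  simp only [(hp _).1, (hp _).2.1, (hp _).2.2.1, (hp _).2.2.2] at h1 h2
  rw [show 2 * (s / 4) = s / 2 by ring] at h1
  refine h1.trans ?_
  have h3 : ∫ z, s / 2 * ((‖f.eval z‖ ^ 2 + ε) ^ (s / 2 - 1)
        * (z * f.derivative.eval z * starRingEnd ℂ (f.eval z)).re) ∂bergmanMeasure α
      = s / (8 * (α - 1)) * (2 * (α - 1) * ∫ z, (‖f.eval z‖ ^ 2 + ε) ^ (s / 2 - 1)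
        * (2 * (z * f.derivative.eval z * starRingEnd ℂ (f.eval z)).re) ∂bergmanMeasure α) := by
    rw [← integral_const_mul, ← integral_const_mul]
    congr 1
    ext z
    field_simp
    ring
  rw [h3, ← h2, ← integral_const_mul, ← integral_const_mul]
  have hpos : ∀ z, ‖f.eval z‖ ^ 2 + ε ≠ 0 := fun z => by positivity
  have hf : Continuous fun z => f.eval z := f.continuous
  have hf' : Continuous fun z => f.derivative.eval z := f.derivative.continuous
  have hc : ∀ b : ℝ, Continuous fun z => (‖f.eval z‖ ^ 2 + ε) ^ b := fun b =>
    Continuous.rpow_const (by fun_prop) fun z => Or.inl (hpos z)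
  have c1 := hc (s / 2 - 2)
  have c2 := hc (s / 2 - 1)
  have c3 := hc (s / 2 - 1 - 1)
  refine integral_mono_ae (Continuous.integrable_bergmanMeasure hα (by fun_prop))
    (Continuous.integrable_bergmanMeasure hα (by fun_prop)) ?_
  filter_upwards [ae_mem_ball_bergmanMeasure α] with z hz
  have hg := one_sub_norm_sq_nonneg hz
  have hφ : 0 < ‖f.eval z‖ ^ 2 + ε := by positivity
  have e1 : (‖f.eval z‖ ^ 2 + ε) ^ (s / 2 - 1)
      = (‖f.eval z‖ ^ 2 + ε) ^ (s / 2 - 2) * (‖f.eval z‖ ^ 2 + ε) := by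
    rw [← Real.rpow_add_one hφ.ne']
    congr 1
    ring
  rw [show s / 2 - 1 - 1 = s / 2 - 2 by ring, e1]
  have hX : 0 ≤ (‖f.eval z‖ ^ 2 + ε) ^ (s / 2 - 2) := Real.rpow_nonneg hφ.le _
  rw [← sub_nonneg]
  have : s / (8 * (α - 1)) * ((1 - ‖z‖ ^ 2) * ((s / 2 - 1) * (‖f.eval z‖ ^ 2 + ε) ^ (s / 2 - 2)
        * (4 * (‖f.eval z‖ ^ 2 * ‖f.derivative.eval z‖ ^ 2))
        + (‖f.eval z‖ ^ 2 + ε) ^ (s / 2 - 2) * (‖f.eval z‖ ^ 2 + ε)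
          * (4 * ‖f.derivative.eval z‖ ^ 2)))
      - (s / 4) ^ 2 / (α - 1) * ((1 - ‖z‖ ^ 2) * ((‖f.eval z‖ ^ 2 + ε) ^ (s / 2 - 2)
        * (4 * (‖f.eval z‖ ^ 2 * ‖f.derivative.eval z‖ ^ 2))))
      = s / (2 * (α - 1)) * ((1 - ‖z‖ ^ 2) * ((‖f.eval z‖ ^ 2 + ε) ^ (s / 2 - 2)
        * (ε * ‖f.derivative.eval z‖ ^ 2))) := by
    field_simp
    ring
  rw [this]
  positivity

lemma integral_pos_of_forall_pos {X : Type*} [MeasurableSpace X] {μ : Measure X}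
    [IsProbabilityMeasure μ] {f : X → ℝ} (hf : Integrable f μ) (h : ∀ x, 0 < f x) :
    0 < ∫ x, f x ∂μ := by
  have hs : Function.support f = Set.univ := by
    ext x
    simp [(h x).ne']
  rw [integral_pos_iff_support_of_nonneg (fun x => (h x).le) hf, hs, measure_univ]
  exact one_pos

lemma integral_pi_succ {X : Type*} [MeasurableSpace X] {n : ℕ} (μ : Fin (n + 1) → Measure X)
    [∀ i, SigmaFinite (μ i)] (F : (Fin (n + 1) → X) → ℝ) :
    ∫ z, F z ∂Measure.pi μ
      = ∫ p, F (Fin.cons p.1 p.2) ∂(μ 0).prod (Measure.pi fun i => μ i.succ) := by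
  have h := (measurePreserving_piFinSuccAbove μ 0).symm.integral_comp' F
  rw [← h]
  simp [MeasurableEquiv.piFinSuccAbove, Fin.insertNthEquiv]

lemma entropy_pi_succ {X : Type*} [MeasurableSpace X] {n : ℕ} (μ : Fin (n + 1) → Measure X)
    [∀ i, SigmaFinite (μ i)] (F : (Fin (n + 1) → X) → ℝ) :
    entropy (Measure.pi μ) F = entropy ((μ 0).prod (Measure.pi fun i => μ i.succ))
      fun p => F (Fin.cons p.1 p.2) := by
  unfold entropy
  rw [integral_pi_succ, integral_pi_succ]

section

variable {X : Type*} [MetricSpace X] [ProperSpace X] [MeasurableSpace X] [BorelSpace X]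
  {Y : Type*} [MetricSpace Y] [ProperSpace Y]

/-- A measure carried by a compact set. -/
def IsCompactlyCarried (μ : Measure X) : Prop := ∃ k, IsCompact k ∧ μ.restrict k = μ

lemma IsCompactlyCarried.integrable {μ : Measure X} [IsFiniteMeasure μ]
    (hμ : IsCompactlyCarried μ) {f : X → ℝ} (hf : Continuous f) : Integrable f μ := by
  obtain ⟨k, hk, hr⟩ := hμ
  rw [← hr]
  exact hf.continuousOn.integrableOn_compact hk

lemma IsCompactlyCarried.continuous_integral {μ : Measure X} [IsFiniteMeasure μ]
    (hμ : IsCompactlyCarried μ) {f : Y → X → ℝ} (hf : Continuous (Function.uncurry f)) :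
    Continuous fun y => ∫ x, f y x ∂μ := by
  obtain ⟨k, hk, hr⟩ := hμ
  have := continuous_parametric_integral_of_continuous (μ := μ) hf hk
  simpa only [hr] using this

lemma IsCompactlyCarried.prod [MeasurableSpace Y] [BorelSpace Y] {μ : Measure X} {ν : Measure Y} [IsFiniteMeasure μ]
    [IsFiniteMeasure ν] (hμ : IsCompactlyCarried μ) (hν : IsCompactlyCarried ν) :
    IsCompactlyCarried (μ.prod ν) := by
  obtain ⟨k, hk, hr⟩ := hμ
  obtain ⟨l, hl, hs⟩ := hν
  exact ⟨k ×ˢ l, hk.prod hl, by rw [← Measure.prod_restrict, hr, hs]⟩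

lemma isCompactlyCarried_pi {n : ℕ} {μ : Fin n → Measure X} [∀ i, IsFiniteMeasure (μ i)]
    (hμ : ∀ i, IsCompactlyCarried (μ i)) : IsCompactlyCarried (Measure.pi μ) := by
  choose k hk hr using hμ
  exact ⟨Set.univ.pi k, isCompact_univ_pi hk, by simp only [Measure.restrict_pi_pi, hr]⟩

lemma isCompactlyCarried_bergmanMeasure (α : ℝ) : IsCompactlyCarried (bergmanMeasure α) :=
  ⟨closedBall 0 1, isCompact_closedBall 0 1, restrict_closedBall_bergmanMeasure α⟩

/-- Subadditivity of entropy on a product of two probability spaces. -/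
lemma entropy_prod_le [MeasurableSpace Y] [BorelSpace Y] {μ : Measure X} {ν : Measure Y} [IsProbabilityMeasure μ]
    [IsProbabilityMeasure ν] (hμ : IsCompactlyCarried μ) (hν : IsCompactlyCarried ν)
    {W : X × Y → ℝ} (hW : Continuous W) (h0 : ∀ p, 0 < W p) :
    entropy (μ.prod ν) W ≤ ∫ y, entropy μ (fun x => W (x, y)) ∂ν
      + ∫ x, entropy ν (fun y => W (x, y)) ∂μ := by
  have hμν := hμ.prod hν
  have hWl : Continuous fun p => W p * Real.log (W p) := Real.continuous_mul_log.comp hW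
  have cA : Continuous fun y => ∫ x, W (x, y) ∂μ := hμ.continuous_integral (by fun_prop)
  have cB : Continuous fun x => ∫ y, W (x, y) ∂ν := hν.continuous_integral (by fun_prop)
  have pA : ∀ y, 0 < ∫ x, W (x, y) ∂μ := fun y =>
    integral_pos_of_forall_pos (hμ.integrable (by fun_prop)) fun x => h0 (x, y)
  have pB : ∀ x, 0 < ∫ y, W (x, y) ∂ν := fun x =>
    integral_pos_of_forall_pos (hν.integrable (by fun_prop)) fun y => h0 (x, y)
  have e1 : ∫ p, W p ∂μ.prod ν = ∫ x, ∫ y, W (x, y) ∂ν ∂μ :=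
    integral_prod _ (hμν.integrable hW)
  have e1' : ∫ p, W p ∂μ.prod ν = ∫ y, ∫ x, W (x, y) ∂μ ∂ν :=
    integral_prod_symm _ (hμν.integrable hW)
  have e2 : ∫ p, W p * Real.log (W p) ∂μ.prod ν
      = ∫ x, ∫ y, W (x, y) * Real.log (W (x, y)) ∂ν ∂μ :=
    integral_prod _ (hμν.integrable hWl)
  have e2' : ∫ p, W p * Real.log (W p) ∂μ.prod ν
      = ∫ y, ∫ x, W (x, y) * Real.log (W (x, y)) ∂μ ∂ν :=
    integral_prod_symm _ (hμν.integrable hWl)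
  have pM : 0 < ∫ p, W p ∂μ.prod ν := by
    rw [e1]
    exact integral_pos_of_forall_pos (hμ.integrable cB) pB
  have cAl : Continuous fun y => (∫ x, W (x, y) ∂μ) * Real.log (∫ x, W (x, y) ∂μ) :=
    Real.continuous_mul_log.comp cA
  have cBl : Continuous fun x => (∫ y, W (x, y) ∂ν) * Real.log (∫ y, W (x, y) ∂ν) :=
    Real.continuous_mul_log.comp cB
  have cWx : Continuous fun y => ∫ x, W (x, y) * Real.log (W (x, y)) ∂μ :=
    hμ.continuous_integral (f := fun y x => W (x, y) * Real.log (W (x, y)))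
      (hWl.comp (continuous_snd.prodMk continuous_fst))
  have cWy : Continuous fun x => ∫ y, W (x, y) * Real.log (W (x, y)) ∂ν :=
    hν.continuous_integral (f := fun x y => W (x, y) * Real.log (W (x, y))) hWl
  unfold entropy
  rw [integral_sub (hν.integrable cWx) (hν.integrable cAl),
    integral_sub (hμ.integrable cWy) (hμ.integrable cBl), ← e2, ← e2']
  have lA : Continuous fun y => Real.log (∫ x, W (x, y) ∂μ) := cA.log fun y => (pA y).ne'
  have lB : Continuous fun x => Real.log (∫ y, W (x, y) ∂ν) := cB.log fun x => (pB x).ne'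
  have lA' : Continuous fun p : X × Y => Real.log (∫ x, W (x, p.2) ∂μ) := lA.comp continuous_snd
  have lB' : Continuous fun p : X × Y => Real.log (∫ y, W (p.1, y) ∂ν) := lB.comp continuous_fst
  have cA' : Continuous fun p : X × Y => ∫ x, W (x, p.2) ∂μ := cA.comp continuous_snd
  have cB' : Continuous fun p : X × Y => ∫ y, W (p.1, y) ∂ν := cB.comp continuous_fst
  set M := ∫ p, W p ∂μ.prod ν with hM
  have iA : Integrable (fun p => W p * Real.log (∫ x, W (x, p.2) ∂μ)) (μ.prod ν) :=
    hμν.integrable (hW.mul lA')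
  have iB : Integrable (fun p => W p * Real.log (∫ y, W (p.1, y) ∂ν)) (μ.prod ν) :=
    hμν.integrable (hW.mul lB')
  have iW : Integrable (fun p => W p * (Real.log M - 1)) (μ.prod ν) :=
    hμν.integrable (hW.mul continuous_const)
  have iAB : Integrable (fun p : X × Y => (∫ y, W (p.1, y) ∂ν) * (∫ x, W (x, p.2) ∂μ) * M⁻¹)
    (μ.prod ν) := hμν.integrable ((cB'.mul cA').mul continuous_const)
  have f1 : ∫ p, W p * Real.log (∫ x, W (x, p.2) ∂μ) ∂μ.prod ν
      = ∫ y, (∫ x, W (x, y) ∂μ) * Real.log (∫ x, W (x, y) ∂μ) ∂ν := by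
    rw [integral_prod_symm _ iA]
    simp only [integral_mul_const]
  have f2 : ∫ p, W p * Real.log (∫ y, W (p.1, y) ∂ν) ∂μ.prod ν
      = ∫ x, (∫ y, W (x, y) ∂ν) * Real.log (∫ y, W (x, y) ∂ν) ∂μ := by
    rw [integral_prod _ iB]
    simp only [integral_mul_const]
  have f3 : ∫ p : X × Y, (∫ y, W (p.1, y) ∂ν) * (∫ x, W (x, p.2) ∂μ) ∂μ.prod ν = M * M := by
    rw [integral_prod_mul (fun x => ∫ y, W (x, y) ∂ν) (fun y => ∫ x, W (x, y) ∂μ), ← e1, ← e1']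
  have key : ∫ p, (W p * Real.log (∫ x, W (x, p.2) ∂μ) + W p * Real.log (∫ y, W (p.1, y) ∂ν))
        ∂μ.prod ν
      ≤ ∫ p, ((W p * Real.log (W p) + W p * (Real.log M - 1))
        + (∫ y, W (p.1, y) ∂ν) * (∫ x, W (x, p.2) ∂μ) * M⁻¹) ∂μ.prod ν := by
    refine integral_mono (iA.add iB) (((hμν.integrable hWl).add iW).add iAB) fun p => ?_
    have h := mul_log_le_mul_log_add (h0 p).le
      (mul_pos (mul_pos (pB p.1) (pA p.2)) (inv_pos.2 pM))
    rw [Real.log_mul (mul_pos (pB p.1) (pA p.2)).ne' (inv_pos.2 pM).ne',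
      Real.log_mul (pB p.1).ne' (pA p.2).ne', Real.log_inv] at h
    dsimp only
    linarith
  rw [integral_add iA iB, f1, f2, integral_add (by exact (hμν.integrable hWl).add iW) iAB,
    integral_add (hμν.integrable hWl) iW,
    integral_mul_const, integral_mul_const, f3, ← hM, mul_assoc, mul_inv_cancel₀ pM.ne'] at key
  linarith

/-- Tensorization of entropy inequalities. -/
theorem entropy_pi_le {n : ℕ} (μ : Fin n → Measure X) [∀ i, IsProbabilityMeasure (μ i)]
    (hμ : ∀ i, IsCompactlyCarried (μ i)) {W : (Fin n → X) → ℝ} (hW : Continuous W)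
    (h0 : ∀ z, 0 < W z) {K : Fin n → (Fin n → X) → ℝ} (hK : ∀ i, Continuous (K i))
    (h : ∀ i z, entropy (μ i) (fun t => W (Function.update z i t))
      ≤ ∫ t, K i (Function.update z i t) ∂μ i) :
    entropy (Measure.pi μ) W ≤ ∑ i, ∫ z, K i z ∂Measure.pi μ := by
  induction n with
  | zero =>
    have e : W = fun _ => W default := by
      ext z
      rw [Subsingleton.elim z default]
    rw [e]
    simp [entropy]
  | succ n ih =>
    have hν : IsCompactlyCarried (Measure.pi fun i : Fin n => μ i.succ) :=
      isCompactlyCarried_pi fun i => hμ i.succ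
    have hcons : Continuous fun p : X × (Fin n → X) => (Fin.cons p.1 p.2 : Fin (n + 1) → X) :=
      Continuous.finCons continuous_fst continuous_snd
    have hKc : ∀ i, Continuous fun p : X × (Fin n → X) =>
        K i (Fin.cons p.1 p.2 : Fin (n + 1) → X) := fun i => (hK i).comp hcons
    have hWc : Continuous fun p : X × (Fin n → X) =>
        W (Fin.cons p.1 p.2 : Fin (n + 1) → X) := hW.comp hcons
    have hInt := fun i => ((hμ 0).prod hν).integrable (hKc i)
    rw [entropy_pi_succ]
    refine (entropy_prod_le (hμ 0) hν hWc fun p => h0 _).trans ?_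
    rw [Fin.sum_univ_succ]
    simp only [integral_pi_succ]
    have hWl : Continuous fun p : X × (Fin n → X) =>
        W (Fin.cons p.1 p.2 : Fin (n + 1) → X) * Real.log (W (Fin.cons p.1 p.2)) :=
      Real.continuous_mul_log.comp hWc
    refine add_le_add ?_ ?_
    · rw [integral_prod_symm _ (hInt 0)]
      refine integral_mono (hν.integrable (Continuous.sub
          ((hμ 0).continuous_integral (f := fun y x => W (Fin.cons x y) * Real.log
            (W (Fin.cons x y))) (hWl.comp (continuous_snd.prodMk continuous_fst)))
          (Real.continuous_mul_log.comp ((hμ 0).continuous_integral (f := fun y x =>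
            W (Fin.cons x y)) (hWc.comp (continuous_snd.prodMk continuous_fst))))))
        (hν.integrable ((hμ 0).continuous_integral (f := fun y x => K 0 (Fin.cons x y))
          ((hKc 0).comp (continuous_snd.prodMk continuous_fst)))) fun y => ?_
      obtain ⟨x₀⟩ : Nonempty X := (μ 0).nonempty_of_neZero
      have := h 0 (Fin.cons x₀ y)
      simpa only [Fin.update_cons_zero] using this
    · have hsum : ∀ x, entropy (Measure.pi fun i : Fin n => μ i.succ)
            (fun y => W (Fin.cons x y))
          ≤ ∑ i : Fin n, ∫ y, K i.succ (Fin.cons x y) ∂Measure.pi fun i : Fin n => μ i.succ := by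
        intro x
        refine ih (fun i => μ i.succ) (fun i => hμ i.succ) (W := fun y => W (Fin.cons x y))
          (hWc.comp (continuous_const.prodMk continuous_id)) (fun y => h0 _)
          (K := fun i y => K i.succ (Fin.cons x y))
          (fun i => (hKc i.succ).comp (continuous_const.prodMk continuous_id)) fun i y => ?_
        have := h i.succ (Fin.cons x y)
        simpa only [Fin.cons_update] using this
      have hcK : ∀ i : Fin n, Continuous fun x => ∫ y, K i.succ (Fin.cons x y)
          ∂Measure.pi fun i : Fin n => μ i.succ := fun i =>
        hν.continuous_integral (f := fun x y => K i.succ (Fin.cons x y)) (hKc i.succ)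
      simp only [integral_prod _ (hInt _)]
      rw [← integral_finsetSum _ fun i _ => (hμ 0).integrable (hcK i)]
      refine integral_mono ((hμ 0).integrable (Continuous.sub
          (hν.continuous_integral (f := fun x y => W (Fin.cons x y) * Real.log
            (W (Fin.cons x y))) hWl)
          (Real.continuous_mul_log.comp (hν.continuous_integral (f := fun x y =>
            W (Fin.cons x y)) hWc))))
        ((hμ 0).integrable (continuous_finsetSum _ fun i _ => hcK i)) hsum

end

/-- The one-variable polynomial obtained from `Q` by freezing all coordinates but the `i`-th. -/
noncomputable def slicePolynomial {n : ℕ} (Q : MvPolynomial (Fin n) ℂ) (i : Fin n)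
    (z : Fin n → ℂ) : Polynomial ℂ :=
  MvPolynomial.aeval (Function.update (fun j => Polynomial.C (z j)) i Polynomial.X) Q

lemma eval_slicePolynomial {n : ℕ} (Q : MvPolynomial (Fin n) ℂ) (i : Fin n) (z : Fin n → ℂ)
    (t : ℂ) : (slicePolynomial Q i z).eval t = MvPolynomial.eval (Function.update z i t) Q := by
  unfold slicePolynomial
  induction Q using MvPolynomial.induction_on with
  | C a => simp
  | add p q hp hq => simp [hp, hq]
  | mul_X p j hp =>
    rw [map_mul, Polynomial.eval_mul, hp, map_mul]
    rcases eq_or_ne j i with rfl | hj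
    · simp
    · simp [hj]

lemma derivative_slicePolynomial {n : ℕ} (Q : MvPolynomial (Fin n) ℂ) (i : Fin n)
    (z : Fin n → ℂ) :
    (slicePolynomial Q i z).derivative = slicePolynomial (MvPolynomial.pderiv i Q) i z := by
  unfold slicePolynomial
  induction Q using MvPolynomial.induction_on with
  | C a => simp
  | add p q hp hq => simp [hp, hq]
  | mul_X p j hp =>
    rw [map_mul, Polynomial.derivative_mul, hp, MvPolynomial.pderiv_mul, map_add, map_mul, map_mul]
    rcases eq_or_ne j i with rfl | hj
    · simp
    · simp [hj, MvPolynomial.pderiv_X_of_ne hj]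

/-- Logarithmic Sobolev type inequality for homogeneous polynomials on a product of weighted
disks. -/
lemma entropy_homogeneous_le {n m : ℕ} {a : Fin n → ℝ} (ha : ∀ i, 1 < a i)
    {Q : MvPolynomial (Fin n) ℂ} (hQ : Q.IsHomogeneous m) {ε s : ℝ} (hε : 0 < ε) (hs : 0 < s) :
    entropy (Measure.pi fun i => bergmanMeasure (a i))
        (fun z => (‖MvPolynomial.eval z Q‖ ^ 2 + ε) ^ (s / 2))
      ≤ s * m / 2 * ∫ z, (‖MvPolynomial.eval z Q‖ ^ 2 + ε) ^ (s / 2)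
          ∂Measure.pi fun i => bergmanMeasure (a i) := by
  have hprob : ∀ i, IsProbabilityMeasure (bergmanMeasure (a i)) := fun i =>
    isProbabilityMeasure_bergmanMeasure (ha i)
  have hcar : IsCompactlyCarried (Measure.pi fun i => bergmanMeasure (a i)) :=
    isCompactlyCarried_pi fun i => isCompactlyCarried_bergmanMeasure (a i)
  have hpos : ∀ z, 0 < ‖MvPolynomial.eval z Q‖ ^ 2 + ε := fun z => by positivity
  have hev : ∀ P : MvPolynomial (Fin n) ℂ, Continuous fun z => MvPolynomial.eval z P :=
    fun P => MvPolynomial.continuous_eval P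
  have hcφ : Continuous fun z => ‖MvPolynomial.eval z Q‖ ^ 2 + ε :=
    ((hev Q).norm.pow 2).add continuous_const
  have hcr : ∀ r : ℝ, Continuous fun z => (‖MvPolynomial.eval z Q‖ ^ 2 + ε) ^ r := fun r =>
    hcφ.rpow_const fun z => Or.inl (hpos z).ne'
  set K : Fin n → (Fin n → ℂ) → ℝ := fun i z =>
    s / 2 * ((‖MvPolynomial.eval z Q‖ ^ 2 + ε) ^ (s / 2 - 1) *
      (z i * MvPolynomial.eval z (MvPolynomial.pderiv i Q)
        * starRingEnd ℂ (MvPolynomial.eval z Q)).re) with hK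
  have hKc : ∀ i, Continuous (K i) := fun i =>
    continuous_const.mul ((hcr _).mul (Complex.continuous_re.comp
      (((continuous_apply i).mul (hev _)).mul (Complex.continuous_conj.comp (hev Q)))))
  have hmain := entropy_pi_le (fun i => bergmanMeasure (a i))
    (fun i => isCompactlyCarried_bergmanMeasure (a i)) (hcr (s / 2))
    (fun z => Real.rpow_pos_of_pos (hpos z) _) hKc (fun i z => by
      have h := entropy_polynomial_le (ha i) (slicePolynomial Q i z) hε hs
      simp only [derivative_slicePolynomial, eval_slicePolynomial] at h
      simpa [hK] using h)
  refine hmain.trans ?_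
  rw [← integral_finsetSum _ fun i _ => hcar.integrable (hKc i), ← integral_const_mul]
  refine integral_mono (hcar.integrable (continuous_finsetSum _ fun i _ => hKc i))
    ((hcar.integrable (hcr _)).const_mul _) fun z => ?_
  have heuler : ∑ i, z i * MvPolynomial.eval z (MvPolynomial.pderiv i Q)
      = m * MvPolynomial.eval z Q := by
    simpa using congrArg (MvPolynomial.eval z) hQ.sum_X_mul_pderiv
  have hsum : ∑ i, K i z = s / 2 * ((‖MvPolynomial.eval z Q‖ ^ 2 + ε) ^ (s / 2 - 1) *
      (m * ‖MvPolynomial.eval z Q‖ ^ 2)) := by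
    simp only [hK]
    rw [← Finset.mul_sum, ← Finset.mul_sum, ← Complex.re_sum, ← Finset.sum_mul, heuler, mul_assoc,
      Complex.mul_conj, ← Complex.normSq_eq_norm_sq, ← Complex.ofReal_natCast,
      ← Complex.ofReal_mul, Complex.ofReal_re]
  have hsplit : (‖MvPolynomial.eval z Q‖ ^ 2 + ε) ^ (s / 2)
      = (‖MvPolynomial.eval z Q‖ ^ 2 + ε) ^ (s / 2 - 1) * (‖MvPolynomial.eval z Q‖ ^ 2 + ε) := by
    rw [← Real.rpow_add_one (hpos z).ne', sub_add_cancel]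
  change ∑ i, K i z ≤ s * m / 2 * (‖MvPolynomial.eval z Q‖ ^ 2 + ε) ^ (s / 2)
  rw [hsum, hsplit]
  have h1 : 0 ≤ s / 2 * (‖MvPolynomial.eval z Q‖ ^ 2 + ε) ^ (s / 2 - 1) * m * ε := by positivity
  linarith

/-- The argument of Gross: a logarithmic Sobolev inequality along all exponentials of `U` yields
a comparison of exponential moments. -/
lemma mgf_rpow_le_of_entropy_le {X : Type*} [MeasurableSpace X] {μ : Measure X}
    [IsProbabilityMeasure μ] {U : X → ℝ} {c : ℝ}
    (hInt : ∀ s, Integrable (fun x => Real.exp (s * U x)) μ)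
    (hent : ∀ s, 0 < s → entropy μ (fun x => Real.exp (s * U x))
      ≤ s * c * ∫ x, Real.exp (s * U x) ∂μ)
    {p q : ℝ} (hp : 0 < p) (hpq : p ≤ q) :
    (∫ x, Real.exp (q * U x) ∂μ) ^ (1 / q)
      ≤ (q / p) ^ c * (∫ x, Real.exp (p * U x) ∂μ) ^ (1 / p) := by
  set Φ : ℝ → ℝ := fun s => ∫ x, Real.exp (s * U x) ∂μ with hΦ
  have hset : ProbabilityTheory.integrableExpSet U μ = Set.univ :=
    Set.eq_univ_of_forall fun s => hInt s
  have hd : ∀ s, HasDerivAt Φ (∫ x, U x * Real.exp (s * U x) ∂μ) s := fun s =>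
    ProbabilityTheory.hasDerivAt_mgf (X := U) (μ := μ) (t := s) (by simp [hset])
  have hpos : ∀ s, 0 < Φ s := fun s =>
    integral_pos_of_forall_pos (hInt s) fun x => Real.exp_pos _
  have hG : ∀ s, 0 < s → HasDerivAt (fun s => Real.log (Φ s) / s - c * Real.log s)
      (((∫ x, U x * Real.exp (s * U x) ∂μ) / Φ s * s - Real.log (Φ s) * 1) / s ^ 2
        - c * s⁻¹) s := fun s hs =>
    (((hd s).log (hpos s).ne').div (hasDerivAt_id s) hs.ne').sub
      ((Real.hasDerivAt_log hs.ne').const_mul c)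
  have hanti : AntitoneOn (fun s => Real.log (Φ s) / s - c * Real.log s) (Set.Ioi 0) := by
    refine antitoneOn_of_deriv_nonpos (convex_Ioi 0)
      (fun s hs => (hG s hs).continuousAt.continuousWithinAt)
      (fun s hs => (hG s (by simpa using hs)).differentiableAt.differentiableWithinAt)
      fun s hs => ?_
    have hs : 0 < s := by simpa using hs
    rw [(hG s hs).deriv]
    have he := hent s hs
    unfold entropy at he
    have hrw : ∫ x, Real.exp (s * U x) * Real.log (Real.exp (s * U x)) ∂μ
        = s * ∫ x, U x * Real.exp (s * U x) ∂μ := by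
      rw [← integral_const_mul]
      exact integral_congr_ae (.of_forall fun x => by simp only [Real.log_exp]; ring)
    rw [hrw] at he
    change _ - Φ s * Real.log (Φ s) ≤ s * c * Φ s at he
    have hP := hpos s
    generalize ∫ x, U x * Real.exp (s * U x) ∂μ = D at he ⊢
    have key : (D / Φ s * s - Real.log (Φ s) * 1) / s ^ 2 - c * s⁻¹
        = (s * D - Φ s * Real.log (Φ s) - s * c * Φ s) / (s ^ 2 * Φ s) := by
      field_simp
    rw [key]
    exact div_nonpos_of_nonpos_of_nonneg (by linarith) (by positivity)
  have hq : 0 < q := hp.trans_le hpq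
  have h := hanti (Set.mem_Ioi.2 hp) (Set.mem_Ioi.2 hq) hpq
  simp only at h
  change Φ q ^ (1 / q) ≤ (q / p) ^ c * Φ p ^ (1 / p)
  rw [Real.rpow_def_of_pos (hpos q), Real.rpow_def_of_pos (hpos p),
    Real.rpow_def_of_pos (div_pos hq hp), ← Real.exp_add, Real.exp_le_exp,
    Real.log_div hq.ne' hp.ne']
  simp only [div_eq_mul_inv, one_mul] at h ⊢
  linarith

/-- Hypercontractivity for homogeneous polynomials on a product of weighted disks, regularised. -/
lemma integral_add_rpow_homogeneous_le {n m : ℕ} {a : Fin n → ℝ} (ha : ∀ i, 1 < a i)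
    {Q : MvPolynomial (Fin n) ℂ} (hQ : Q.IsHomogeneous m) {ε p q : ℝ} (hε : 0 < ε) (hp : 0 < p)
    (hpq : p ≤ q) :
    (∫ z, (‖MvPolynomial.eval z Q‖ ^ 2 + ε) ^ (q / 2)
        ∂Measure.pi fun i => bergmanMeasure (a i)) ^ (1 / q)
      ≤ (q / p) ^ ((m : ℝ) / 2) * (∫ z, (‖MvPolynomial.eval z Q‖ ^ 2 + ε) ^ (p / 2)
        ∂Measure.pi fun i => bergmanMeasure (a i)) ^ (1 / p) := by
  have hprob : ∀ i, IsProbabilityMeasure (bergmanMeasure (a i)) := fun i =>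
    isProbabilityMeasure_bergmanMeasure (ha i)
  have hcar : IsCompactlyCarried (Measure.pi fun i => bergmanMeasure (a i)) :=
    isCompactlyCarried_pi fun i => isCompactlyCarried_bergmanMeasure (a i)
  have hpos : ∀ z, 0 < ‖MvPolynomial.eval z Q‖ ^ 2 + ε := fun z => by positivity
  have hcφ : Continuous fun z => ‖MvPolynomial.eval z Q‖ ^ 2 + ε :=
    ((MvPolynomial.continuous_eval Q).norm.pow 2).add continuous_const
  have hexp : ∀ (s : ℝ) z, (‖MvPolynomial.eval z Q‖ ^ 2 + ε) ^ (s / 2)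
      = Real.exp (s * (Real.log (‖MvPolynomial.eval z Q‖ ^ 2 + ε) / 2)) := fun s z => by
    rw [Real.rpow_def_of_pos (hpos z)]
    ring_nf
  simp only [hexp]
  refine mgf_rpow_le_of_entropy_le (fun s => ?_) (fun s hs => ?_) hp hpq
  · simp only [← hexp]
    exact hcar.integrable (hcφ.rpow_const fun z => Or.inl (hpos z).ne')
  · simp only [← hexp]
    exact (entropy_homogeneous_le ha hQ hε hs).trans_eq (by ring)

/-- Hypercontractivity for homogeneous polynomials on a product of weighted disks. -/
lemma integral_rpow_homogeneous_le {n m : ℕ} {a : Fin n → ℝ} (ha : ∀ i, 1 < a i)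
    {Q : MvPolynomial (Fin n) ℂ} (hQ : Q.IsHomogeneous m) {p q : ℝ} (hp : 0 < p)
    (hpq : p ≤ q) :
    (∫ z, ‖MvPolynomial.eval z Q‖ ^ q ∂Measure.pi fun i => bergmanMeasure (a i)) ^ (1 / q)
      ≤ (q / p) ^ ((m : ℝ) / 2) * (∫ z, ‖MvPolynomial.eval z Q‖ ^ p
        ∂Measure.pi fun i => bergmanMeasure (a i)) ^ (1 / p) := by
  have hprob : ∀ i, IsProbabilityMeasure (bergmanMeasure (a i)) := fun i =>
    isProbabilityMeasure_bergmanMeasure (ha i)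
  have hcar : IsCompactlyCarried (Measure.pi fun i => bergmanMeasure (a i)) :=
    isCompactlyCarried_pi fun i => isCompactlyCarried_bergmanMeasure (a i)
  have hq : 0 < q := hp.trans_le hpq
  have hcont : ∀ s : ℝ, 0 < s → Continuous fun ε : ℝ =>
      (∫ z, (‖MvPolynomial.eval z Q‖ ^ 2 + |ε|) ^ (s / 2)
        ∂Measure.pi fun i => bergmanMeasure (a i)) ^ (1 / s) := fun s hs => by
    have hf : Continuous (Function.uncurry fun (ε : ℝ) (z : Fin n → ℂ) =>
        (‖MvPolynomial.eval z Q‖ ^ 2 + |ε|) ^ (s / 2)) := by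
      refine Continuous.rpow_const (f := fun x : ℝ × (Fin n → ℂ) =>
        ‖MvPolynomial.eval x.2 Q‖ ^ 2 + |x.1|) ?_ fun _ => Or.inr (by positivity)
      exact (((MvPolynomial.continuous_eval Q).comp continuous_snd).norm.pow 2).add
        continuous_fst.abs
    exact (hcar.continuous_integral hf).rpow_const fun _ => Or.inr (by positivity)
  have hzero : ∀ (s : ℝ) z, (‖MvPolynomial.eval z Q‖ ^ 2 + |(0 : ℝ)|) ^ (s / 2)
      = ‖MvPolynomial.eval z Q‖ ^ s := fun s z => by
    rw [abs_zero, add_zero, ← Real.rpow_natCast, ← Real.rpow_mul (norm_nonneg _)]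
    congr 1
    push_cast
    ring
  have hle := le_of_tendsto_of_tendsto
    ((hcont q hq).continuousWithinAt (s := Set.Ioi 0) (x := 0)).tendsto
    (((hcont p hp).const_mul ((q / p) ^ ((m : ℝ) / 2))).continuousWithinAt
      (s := Set.Ioi 0) (x := 0)).tendsto
    (by
      filter_upwards [self_mem_nhdsWithin] with ε hε
      exact integral_add_rpow_homogeneous_le ha hQ (abs_pos.2 (ne_of_gt hε)) hp hpq)
  simpa only [hzero] using hle

section

open Filter Topology

lemma integral_pi_snoc {X : Type*} [MeasurableSpace X] {n : ℕ} (μ : Fin (n + 1) → Measure X)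
    [∀ i, SigmaFinite (μ i)] (F : (Fin (n + 1) → X) → ℝ) :
    ∫ z, F z ∂Measure.pi μ
      = ∫ p, F (Fin.snoc p.2 p.1)
          ∂(μ (Fin.last n)).prod (Measure.pi fun i : Fin n => μ i.castSucc) := by
  have h := (measurePreserving_piFinSuccAbove μ (Fin.last n)).symm.integral_comp' F
  rw [← h]
  simp [MeasurableEquiv.piFinSuccAbove, Fin.insertNthEquiv, Fin.insertNth_last']

lemma eval_mul_of_isHomogeneous {σ R : Type*} [CommSemiring R] {m : ℕ} {Q : MvPolynomial σ R}
    (hQ : Q.IsHomogeneous m) (c : R) (z : σ → R) :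
    MvPolynomial.eval (fun i => c * z i) Q = c ^ m * MvPolynomial.eval z Q := by
  rw [MvPolynomial.eval_eq, MvPolynomial.eval_eq, Finset.mul_sum]
  refine Finset.sum_congr rfl fun d hd => ?_
  have hdeg : ∑ i ∈ d.support, d i = m := by
    rw [← hQ (MvPolynomial.mem_support_iff.1 hd)]
    exact DFunLike.congr_fun Finsupp.degree_eq_weight_one d
  simp_rw [mul_pow]
  rw [Finset.prod_mul_distrib, Finset.prod_pow_eq_pow_sum, hdeg]
  ring

lemma integral_one_sub_norm_sq_bergmanMeasure {β : ℝ} (hβ : 1 < β) :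
    ∫ z, (1 - ‖z‖ ^ 2) ∂bergmanMeasure β = (β - 1) / β := by
  have := isProbabilityMeasure_bergmanMeasure (α := β + 1) (by linarith)
  have h := integral_bergmanMeasure_succ hβ fun _ => 1
  have h1 : β - 1 ≠ 0 := by linarith
  simp only [integral_const, probReal_univ, smul_eq_mul, mul_one] at h
  field_simp at h ⊢
  linarith

/-- The measures `dA_β` concentrate on the unit circle as `β → 1⁺`. -/
lemma tendsto_integral_bergmanMeasure_one {H : ℂ → ℝ} (hH : Continuous H)
    (hrot : ∀ (c : Circle) w, H (c * w) = H w) :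
    Tendsto (fun β => ∫ w, H w ∂bergmanMeasure β) (𝓝[>] 1) (𝓝 (H 1)) := by
  have hrad : ∀ w, H w = H ‖w‖ := fun w => by
    conv_lhs => rw [← Complex.norm_mul_exp_arg_mul_I w, mul_comm, ← Circle.coe_exp, hrot]
  obtain ⟨M, hM⟩ := (isCompact_closedBall (0 : ℂ) 1).exists_bound_of_continuousOn
    (f := fun w => H w - H 1) (by fun_prop)
  have hM0 : 0 ≤ M := (norm_nonneg _).trans (hM 0 (by simp))
  have hbound : ∀ ε > 0, ∃ C : ℝ, ∀ w ∈ ball (0 : ℂ) 1,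
      |H w - H 1| ≤ ε + C * (1 - ‖w‖ ^ 2) := by
    intro ε hε
    obtain ⟨δ, hδ, hδH⟩ := Metric.continuousAt_iff.1 (hH.continuousAt (x := 1)) ε hε
    refine ⟨M / δ, fun w hw => ?_⟩
    have hnn : 0 ≤ 1 - ‖w‖ ^ 2 := one_sub_norm_sq_nonneg hw
    rw [mem_ball_zero_iff] at hw
    by_cases hc : 1 - ‖w‖ < δ
    · have h1 : dist (‖w‖ : ℂ) 1 < δ := by
        rw [dist_eq_norm, ← Complex.ofReal_one, ← Complex.ofReal_sub, Complex.norm_real,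
          Real.norm_eq_abs, abs_sub_comm, abs_of_pos (by linarith)]
        exact hc
      have h2 := hδH h1
      rw [← hrad, Real.dist_eq] at h2
      have : 0 ≤ M / δ * (1 - ‖w‖ ^ 2) := by positivity
      linarith
    · have h1 : δ ≤ 1 - ‖w‖ ^ 2 := by nlinarith [norm_nonneg w]
      have h2 := hM w (mem_closedBall_zero_iff.2 hw.le)
      rw [Real.norm_eq_abs] at h2
      have h3 : M / δ * δ ≤ M / δ * (1 - ‖w‖ ^ 2) :=
        mul_le_mul_of_nonneg_left h1 (by positivity)
      rw [div_mul_cancel₀ _ hδ.ne'] at h3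
      linarith
  rw [Metric.tendsto_nhds]
  intro ε hε
  obtain ⟨C, hC⟩ := hbound (ε / 2) (by positivity)
  have hlim : Tendsto (fun β : ℝ => ε / 2 + C * ((β - 1) / β)) (𝓝[>] 1) (𝓝 (ε / 2)) := by
    have : ContinuousAt (fun β : ℝ => ε / 2 + C * ((β - 1) / β)) 1 := by
      fun_prop (disch := norm_num)
    simpa using this.tendsto.mono_left nhdsWithin_le_nhds
  filter_upwards [self_mem_nhdsWithin, hlim.eventually (gt_mem_nhds (half_lt_self hε))]
    with β hβ hlt
  have hβ : 1 < β := hβ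
  have := isProbabilityMeasure_bergmanMeasure hβ
  refine lt_of_le_of_lt ?_ hlt
  have hi : Integrable (fun w => H w - H 1) (bergmanMeasure β) :=
    Continuous.integrable_bergmanMeasure hβ (by fun_prop)
  have hj : Integrable (fun w : ℂ => C * (1 - ‖w‖ ^ 2)) (bergmanMeasure β) :=
    Continuous.integrable_bergmanMeasure hβ (by fun_prop)
  have heq : ∫ w, H w ∂bergmanMeasure β - H 1 = ∫ w, (H w - H 1) ∂bergmanMeasure β := by
    rw [integral_sub (hH.integrable_bergmanMeasure hβ) (integrable_const _)]
    simp
  rw [Real.dist_eq, heq]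
  calc |∫ w, (H w - H 1) ∂bergmanMeasure β|
      ≤ ∫ w, |H w - H 1| ∂bergmanMeasure β := abs_integral_le_integral_abs
    _ ≤ ∫ w, (ε / 2 + C * (1 - ‖w‖ ^ 2)) ∂bergmanMeasure β := by
        refine integral_mono_ae hi.abs ((integrable_const _).add hj) ?_
        filter_upwards [ae_mem_ball_bergmanMeasure β] with w hw using hC w hw
    _ = ε / 2 + C * ((β - 1) / β) := by
        rw [integral_add (integrable_const _) hj, integral_const_mul,
          integral_one_sub_norm_sq_bergmanMeasure hβ]
        simp

/-- The `s`-th moment in `𝐳` of `|Q(𝐳, w)|`, as a function of `w`. -/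
noncomputable def sliceMoment {n : ℕ} (α s : ℝ) (Q : MvPolynomial (Fin (n + 1)) ℂ) (w : ℂ) : ℝ :=
  ∫ z, ‖MvPolynomial.eval (Fin.snoc z w) Q‖ ^ s ∂bergmanMeasurePi n α

section sliceMoment

variable {n m : ℕ} {α s : ℝ} {Q : MvPolynomial (Fin (n + 1)) ℂ}

lemma continuous_norm_eval_snoc_rpow (hs : 0 < s) :
    Continuous fun p : ℂ × (Fin n → ℂ) =>
      ‖MvPolynomial.eval (Fin.snoc p.2 p.1 : Fin (n + 1) → ℂ) Q‖ ^ s := by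
  refine Continuous.rpow_const ?_ fun _ => Or.inr hs.le
  exact ((MvPolynomial.continuous_eval Q).comp
    (Continuous.finSnoc continuous_snd continuous_fst)).norm

lemma continuous_sliceMoment (hα : 1 < α) (hs : 0 < s) : Continuous (sliceMoment α s Q) := by
  have := isProbabilityMeasure_bergmanMeasure hα
  have hcar : IsCompactlyCarried (Measure.pi fun _ : Fin n => bergmanMeasure α) :=
    isCompactlyCarried_pi fun _ => isCompactlyCarried_bergmanMeasure α
  exact hcar.continuous_integral (continuous_norm_eval_snoc_rpow hs)

lemma mul_snoc (c w : ℂ) (z : Fin n → ℂ) :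
    (Fin.snoc (fun i => c * z i) (c * w) : Fin (n + 1) → ℂ)
      = fun i => c * (Fin.snoc z w : Fin (n + 1) → ℂ) i := by
  funext i
  refine Fin.lastCases ?_ (fun j => ?_) i <;> simp

lemma sliceMoment_circle_mul (hα : 1 < α) (hQ : Q.IsHomogeneous m) (c : Circle) (w : ℂ) :
    sliceMoment α s Q (c * w) = sliceMoment α s Q w := by
  have := isProbabilityMeasure_bergmanMeasure hα
  have hmp : MeasurePreserving (fun (z : Fin n → ℂ) i => (c : ℂ) * z i)
      (Measure.pi fun _ => bergmanMeasure α) (Measure.pi fun _ => bergmanMeasure α) :=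
    measurePreserving_pi _ _ fun _ => measurePreserving_mul_bergmanMeasure c
  have hemb : MeasurableEmbedding (fun (z : Fin n → ℂ) i => (c : ℂ) * z i) :=
    (Homeomorph.piCongrRight fun _ : Fin n => (rotation c).toHomeomorph).measurableEmbedding
  unfold sliceMoment bergmanMeasurePi
  rw [← hmp.integral_comp hemb]
  simp only [mul_snoc, eval_mul_of_isHomogeneous hQ, norm_mul, norm_pow, Circle.norm_coe, one_pow,
    one_mul]

lemma integral_pi_eq_integral_sliceMoment (hα : 1 < α) {β : ℝ} (hβ : 1 < β) (hs : 0 < s) :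
    ∫ z, ‖MvPolynomial.eval z Q‖ ^ s
        ∂(Measure.pi fun i => bergmanMeasure ((Fin.snoc (fun _ => α) β : Fin (n + 1) → ℝ) i))
      = ∫ w, sliceMoment α s Q w ∂bergmanMeasure β := by
  have := isProbabilityMeasure_bergmanMeasure hα
  have := isProbabilityMeasure_bergmanMeasure hβ
  have : ∀ i, IsProbabilityMeasure
      (bergmanMeasure ((Fin.snoc (fun _ => α) β : Fin (n + 1) → ℝ) i)) := fun i => by
    refine Fin.lastCases ?_ (fun j => ?_) i <;> simpa
  have hcar : IsCompactlyCarried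
      ((bergmanMeasure β).prod (Measure.pi fun _ : Fin n => bergmanMeasure α)) :=
    (isCompactlyCarried_bergmanMeasure β).prod
      (isCompactlyCarried_pi fun _ => isCompactlyCarried_bergmanMeasure α)
  rw [integral_pi_snoc]
  simp only [Fin.snoc_last, Fin.snoc_castSucc]
  rw [integral_prod _ (hcar.integrable (continuous_norm_eval_snoc_rpow hs))]
  rfl

lemma sliceMoment_one_rpow_le (hα : 1 < α) (hQ : Q.IsHomogeneous m) {p q : ℝ} (hp : 0 < p)
    (hpq : p ≤ q) :
    sliceMoment α q Q 1 ^ (1 / q)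
      ≤ (q / p) ^ ((m : ℝ) / 2) * sliceMoment α p Q 1 ^ (1 / p) := by
  have hq : 0 < q := hp.trans_le hpq
  have hlim : ∀ s : ℝ, 0 < s → Tendsto
      (fun β => (∫ w, sliceMoment α s Q w ∂bergmanMeasure β) ^ (1 / s)) (𝓝[>] 1)
      (𝓝 (sliceMoment α s Q 1 ^ (1 / s))) := fun s hs =>
    (tendsto_integral_bergmanMeasure_one (continuous_sliceMoment hα hs)
      (sliceMoment_circle_mul hα hQ)).rpow_const (Or.inr (by positivity))
  refine le_of_tendsto_of_tendsto (hlim q hq)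
    ((hlim p hp).const_mul ((q / p) ^ ((m : ℝ) / 2))) ?_
  filter_upwards [self_mem_nhdsWithin] with β hβ
  rw [← integral_pi_eq_integral_sliceMoment hα hβ hq,
    ← integral_pi_eq_integral_sliceMoment hα hβ hp]
  refine integral_rpow_homogeneous_le (fun i => ?_) hQ hp hpq
  refine Fin.lastCases ?_ (fun j => ?_) i
  · simpa using hβ
  · simpa using hα

lemma circle_average_sliceMoment (hα : 1 < α) (hQ : Q.IsHomogeneous m) :
    (2 * Real.pi)⁻¹ * ∫ θ in (0 : ℝ)..(2 * Real.pi),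
      sliceMoment α s Q (Complex.exp (θ * Complex.I)) = sliceMoment α s Q 1 := by
  have h : ∀ θ : ℝ, sliceMoment α s Q (Complex.exp (θ * Complex.I)) = sliceMoment α s Q 1 :=
    fun θ => by
      rw [← Circle.coe_exp, ← mul_one (Circle.exp θ : ℂ), sliceMoment_circle_mul hα hQ]
  simp only [h, intervalIntegral.integral_const, sub_zero, smul_eq_mul]
  rw [inv_mul_cancel_left₀ (by positivity)]

end sliceMoment

end

/-- Mixed-norm hypercontractive estimate for `m`-homogeneous polynomials `Q(𝐳, w)`:
with `r₀ = √(p/q)`,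
`‖Q(r₀·, r₀·)‖_{A_α^q(𝔻ⁿ,𝐳) × H^q(𝕋,w)} ≤ ‖Q‖_{A_α^p(𝔻ⁿ,𝐳) × H^p(𝕋,w)}`, and,
equivalently by homogeneity,
`‖Q‖_{A_α^q(𝔻ⁿ,𝐳) × H^q(𝕋,w)} ≤ (q/p)^{m/2} ‖Q‖_{A_α^p(𝔻ⁿ,𝐳) × H^p(𝕋,w)}`.
The circle `𝕋` carries the normalized arc-length measure. -/
theorem mixed_norm_hypercontractive
    (n m : ℕ) (hn : 0 < n) (hm : 0 < m)
    (α p q : ℝ) (hα : 1 < α) (hp : 0 < p) (hpq : p ≤ q) (hq2 : 2 ≤ q)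
    (r₀ : ℝ) (hr₀ : r₀ = Real.sqrt (p / q))
    (Q : MvPolynomial (Fin (n + 1)) ℂ) (hQ : Q.IsHomogeneous m) :
    (((2 * Real.pi)⁻¹ *
        ∫ θ in (0 : ℝ)..(2 * Real.pi),
          ∫ z, ‖MvPolynomial.eval
              (Fin.snoc (fun i => (r₀ : ℂ) * z i) ((r₀ : ℂ) * Complex.exp (θ * Complex.I))) Q‖ ^ q
            ∂(bergmanMeasurePi n α)) ^ (1 / q) ≤
      ((2 * Real.pi)⁻¹ *
        ∫ θ in (0 : ℝ)..(2 * Real.pi),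
          ∫ z, ‖MvPolynomial.eval
              (Fin.snoc z (Complex.exp (θ * Complex.I))) Q‖ ^ p
            ∂(bergmanMeasurePi n α)) ^ (1 / p)) ∧
    ((2 * Real.pi)⁻¹ *
        ∫ θ in (0 : ℝ)..(2 * Real.pi),
          ∫ z, ‖MvPolynomial.eval
              (Fin.snoc z (Complex.exp (θ * Complex.I))) Q‖ ^ q
            ∂(bergmanMeasurePi n α)) ^ (1 / q) ≤
      (q / p) ^ ((m : ℝ) / 2) *
        ((2 * Real.pi)⁻¹ *
          ∫ θ in (0 : ℝ)..(2 * Real.pi),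
            ∫ z, ‖MvPolynomial.eval
                (Fin.snoc z (Complex.exp (θ * Complex.I))) Q‖ ^ p
              ∂(bergmanMeasurePi n α)) ^ (1 / p) := by
  have hq : 0 < q := hp.trans_le hpq
  have hsecond := sliceMoment_one_rpow_le hα hQ hp hpq
  have hmean : ∀ s : ℝ, (2 * Real.pi)⁻¹ * ∫ θ in (0 : ℝ)..(2 * Real.pi),
      ∫ z, ‖MvPolynomial.eval (Fin.snoc z (Complex.exp (θ * Complex.I))) Q‖ ^ s
        ∂(bergmanMeasurePi n α) = sliceMoment α s Q 1 :=
    fun s => circle_average_sliceMoment hα hQ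
  have hr0 : 0 ≤ r₀ := hr₀ ▸ Real.sqrt_nonneg _
  have hscale : ∀ (z : Fin n → ℂ) (w : ℂ),
      ‖MvPolynomial.eval (Fin.snoc (fun i => (r₀ : ℂ) * z i) ((r₀ : ℂ) * w)) Q‖ ^ q
        = (r₀ ^ m) ^ q * ‖MvPolynomial.eval (Fin.snoc z w) Q‖ ^ q := fun z w => by
    rw [mul_snoc, eval_mul_of_isHomogeneous hQ, norm_mul, norm_pow, Complex.norm_real,
      Real.norm_of_nonneg hr0, Real.mul_rpow (by positivity) (norm_nonneg _)]
  simp only [hscale, integral_const_mul, intervalIntegral.integral_const_mul]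
  rw [mul_left_comm, hmean, hmean]
  refine ⟨?_, hsecond⟩
  have hmom : 0 ≤ sliceMoment α q Q 1 :=
    integral_nonneg fun z => Real.rpow_nonneg (norm_nonneg _) _
  have hcancel : r₀ ^ m * (q / p) ^ ((m : ℝ) / 2) = 1 := by
    have h : r₀ ^ m = (p / q) ^ ((m : ℝ) / 2) := by
      rw [hr₀, Real.sqrt_eq_rpow, ← Real.rpow_natCast, ← Real.rpow_mul (by positivity)]
      ring_nf
    rw [h, ← Real.mul_rpow (by positivity) (by positivity), div_mul_div_cancel₀ hq.ne',
      div_self hp.ne', Real.one_rpow]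
  rw [Real.mul_rpow (by positivity) hmom, ← Real.rpow_mul (by positivity), mul_one_div_cancel hq.ne',
    Real.rpow_one]
  calc r₀ ^ m * sliceMoment α q Q 1 ^ (1 / q)
      ≤ r₀ ^ m * ((q / p) ^ ((m : ℝ) / 2) * sliceMoment α p Q 1 ^ (1 / p)) :=
        mul_le_mul_of_nonneg_left hsecond (by positivity)
    _ = sliceMoment α p Q 1 ^ (1 / p) := by rw [← mul_assoc, hcancel, one_mul]
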